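/- arXiv:math/0406574 — 2 statements merged into one kernel-verified Lean document; each statement's English description precedes it below -/
import Mathlib

section
/- Let l ∈ ℕ be even. Then for every n ≥ 1, K^{B_n}_{(l,0,…,0),0}(q) = q^{l/2} · K^{C_n}_{(l,0,…,0),0}(q); and for every n ≥ 2, K^{D_n}_{(l,0,…,0),0}(q) = K^{B_{n−1}}_{(l,0,…,0),0}(q) = q^{l/2} · K^{C_{n−1}}_{(l,0,…,0),0}(q). Here (l,0,…,0) denotes the dominant weight of the appropriate rank whose largest coordinate is l and whose other coordinates are 0, and 0 denotes the zero weight. -/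
open scoped BigOperators

noncomputable section

/-- The `q`-analogue of Kostant's partition function attached to the finite set `R`
of positive roots: the coefficient of `q^k` is the number of families
`(m_α)_{α ∈ R}` of nonnegative integers with `∑ m_α = k` and `∑ m_α • α = β`. -/
def kostantQ {n : ℕ} (R : Finset (Fin n → ℚ)) (β : Fin n → ℚ) : PowerSeries ℤ :=
  PowerSeries.mk fun k =>
    (Nat.card {m : {α // α ∈ R} → ℕ //
      (∑ α, m α) = k ∧ (∑ α, (m α : ℚ) • (α : Fin n → ℚ)) = β} : ℤ)

/-- Positive roots of type `D_n` : `e_i - e_j` and `e_i + e_j` for `j < i`. -/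
def rootsD (n : ℕ) : Finset (Fin n → ℚ) :=
  ((Finset.univ : Finset (Fin n × Fin n)).filter fun p => p.2 < p.1).image
      (fun p => Pi.single p.1 (1 : ℚ) - Pi.single p.2 1) ∪
  ((Finset.univ : Finset (Fin n × Fin n)).filter fun p => p.2 < p.1).image
      (fun p => Pi.single p.1 (1 : ℚ) + Pi.single p.2 1)

/-- Positive roots of type `B_n`. -/
def rootsB (n : ℕ) : Finset (Fin n → ℚ) :=
  rootsD n ∪ (Finset.univ : Finset (Fin n)).image fun i => Pi.single i (1 : ℚ)

/-- Positive roots of type `C_n`. -/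
def rootsC (n : ℕ) : Finset (Fin n → ℚ) :=
  rootsD n ∪ (Finset.univ : Finset (Fin n)).image fun i => Pi.single i (2 : ℚ)

/-- Positive roots of type `A_{n-1}` : `e_i - e_j` for `j < i`. -/
def rootsA (n : ℕ) : Finset (Fin n → ℚ) :=
  ((Finset.univ : Finset (Fin n × Fin n)).filter fun p => p.2 < p.1).image
      fun p => Pi.single p.1 (1 : ℚ) - Pi.single p.2 1

/-- `ρ` of type `B_n` : `e_i`-coordinate `i - 1/2` (`0`-based index `i ↦ i + 1/2`). -/
def rhoB (n : ℕ) : Fin n → ℚ := fun i => ((i : ℕ) : ℚ) + 1/2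

/-- `ρ` of type `C_n` : `e_i`-coordinate `i`. -/
def rhoC (n : ℕ) : Fin n → ℚ := fun i => ((i : ℕ) : ℚ) + 1

/-- `ρ` of type `D_n` : `e_i`-coordinate `i - 1`. -/
def rhoD (n : ℕ) : Fin n → ℚ := fun i => ((i : ℕ) : ℚ)

/-- `ρ` of type `A_{n-1}` : `e_i`-coordinate `i - 1`. -/
def rhoA (n : ℕ) : Fin n → ℚ := fun i => ((i : ℕ) : ℚ)

/-- The signed permutation `(σ, ε)` acting on a weight: it maps `e_j` to `± e_{σ j}`. -/
def wAct {n : ℕ} (σ : Equiv.Perm (Fin n)) (ε : Fin n → Bool) (β : Fin n → ℚ) :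
    Fin n → ℚ := fun i => (if ε i then -1 else 1) * β (σ⁻¹ i)

/-- The determinant (sign) of the signed permutation `(σ, ε)`. -/
def wDet {n : ℕ} (σ : Equiv.Perm (Fin n)) (ε : Fin n → Bool) : ℤ :=
  (Equiv.Perm.sign σ : ℤ) * ∏ i, (if ε i then (-1 : ℤ) else 1)

/-- Kostka-Foulkes polynomial of type `B_n`, as a power series in `q`. -/
def KB (n : ℕ) (lam mu : Fin n → ℚ) : PowerSeries ℤ :=
  ∑ σ : Equiv.Perm (Fin n), ∑ ε : Fin n → Bool,
    wDet σ ε • kostantQ (rootsB n) (wAct σ ε (lam + rhoB n) - (mu + rhoB n))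

/-- Kostka-Foulkes polynomial of type `C_n`, as a power series in `q`. -/
def KC (n : ℕ) (lam mu : Fin n → ℚ) : PowerSeries ℤ :=
  ∑ σ : Equiv.Perm (Fin n), ∑ ε : Fin n → Bool,
    wDet σ ε • kostantQ (rootsC n) (wAct σ ε (lam + rhoC n) - (mu + rhoC n))

/-- Kostka-Foulkes polynomial of type `D_n`, as a power series in `q` (the Weyl group
consists of the signed permutations with an even number of sign changes). -/
def KD (n : ℕ) (lam mu : Fin n → ℚ) : PowerSeries ℤ :=
  ∑ σ : Equiv.Perm (Fin n), ∑ ε : Fin n → Bool,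
    if (∏ i, (if ε i then (-1 : ℤ) else 1)) = 1 then
      wDet σ ε • kostantQ (rootsD n) (wAct σ ε (lam + rhoD n) - (mu + rhoD n))
    else 0

/-- Kostka-Foulkes polynomial of type `A_{n-1}`, as a power series in `q`. -/
def KA (n : ℕ) (lam mu : Fin n → ℚ) : PowerSeries ℤ :=
  ∑ σ : Equiv.Perm (Fin n),
    (Equiv.Perm.sign σ : ℤ) •
      kostantQ (rootsA n) ((fun i => (lam + rhoA n) (σ⁻¹ i)) - (mu + rhoA n))

/-- Dominant weight of type `B_n` : `λ_n ≥ ⋯ ≥ λ_1 ≥ 0`, all coordinates in `ℤ`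
or all in `ℤ + 1/2`. -/
def DominantB {n : ℕ} (lam : Fin n → ℚ) : Prop :=
  Monotone lam ∧ (∀ i, 0 ≤ lam i) ∧
    ((∀ i, ∃ z : ℤ, lam i = z) ∨ (∀ i, ∃ z : ℤ, lam i = z + 1/2))

/-- Dominant weight of type `C_n` : `λ_n ≥ ⋯ ≥ λ_1 ≥ 0`, integer coordinates. -/
def DominantC {n : ℕ} (lam : Fin n → ℚ) : Prop :=
  Monotone lam ∧ (∀ i, 0 ≤ lam i) ∧ ∀ i, ∃ z : ℤ, lam i = z

/-- Dominant weight of type `D_n` : `λ_n ≥ ⋯ ≥ λ_2 ≥ |λ_1|`, all coordinates in `ℤ`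
or all in `ℤ + 1/2`. -/
def DominantD {n : ℕ} (lam : Fin n → ℚ) : Prop :=
  (∀ i j : Fin n, i ≤ j → 0 < (i : ℕ) → lam i ≤ lam j) ∧
  (∀ h : 0 < n, ∀ j : Fin n, 0 < (j : ℕ) → |lam ⟨0, h⟩| ≤ lam j) ∧
  ((∀ i, ∃ z : ℤ, lam i = z) ∨ (∀ i, ∃ z : ℤ, lam i = z + 1/2))

/-- Restriction of a weight of rank `n` to the first `n - 1` coordinates
(i.e. forgetting the `e_n`-coordinate). -/
def restrict1 {n : ℕ} (lam : Fin n → ℚ) : Fin (n - 1) → ℚ :=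
  fun i => lam ⟨(i : ℕ), by have := i.2; omega⟩

/-- Pieri number `b^λ_{γ,r}` of type `B_n`. -/
def bPieri {m : ℕ} (γ lam : Fin m → ℚ) (r : ℕ) : ℕ :=
  Nat.card {t : (Fin m → ℕ) × (Fin m → ℕ) × Bool //
    ((cond t.2.2 1 0) + ∑ i, (t.1 i + t.2.1 i)) = r ∧
    (∀ i, ((t.2.1 i : ℚ) - (t.1 i : ℚ)) = lam i - γ i) ∧
    (∀ i : Fin m, ∀ h : (i : ℕ) + 1 < m,
      lam i ≤ lam ⟨(i : ℕ) + 1, h⟩ - (t.2.1 ⟨(i : ℕ) + 1, h⟩ : ℚ)) ∧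
    (∀ i : Fin m, ∀ h : (i : ℕ) + 1 < m,
      lam i + (t.1 i : ℚ) - (t.2.1 i : ℚ) ≤
        lam ⟨(i : ℕ) + 1, h⟩ - (t.2.1 ⟨(i : ℕ) + 1, h⟩ : ℚ)) ∧
    (∀ h : 0 < m,
      if t.2.2 then (0 : ℚ) < lam ⟨0, h⟩ - (t.2.1 ⟨0, h⟩ : ℚ)
      else (0 : ℚ) ≤ lam ⟨0, h⟩ - (t.2.1 ⟨0, h⟩ : ℚ))}

/-- Pieri number `c^λ_{γ,r}` of type `C_n`. -/
def cPieri {m : ℕ} (γ lam : Fin m → ℚ) (r : ℕ) : ℕ :=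
  Nat.card {t : (Fin m → ℕ) × (Fin m → ℕ) //
    (∑ i, (t.1 i + t.2 i)) = r ∧
    (∀ i, ((t.2 i : ℚ) - (t.1 i : ℚ)) = lam i - γ i) ∧
    (∀ i : Fin m, ∀ h : (i : ℕ) + 1 < m,
      lam i ≤ lam ⟨(i : ℕ) + 1, h⟩ - (t.2 ⟨(i : ℕ) + 1, h⟩ : ℚ)) ∧
    (∀ i : Fin m, ∀ h : (i : ℕ) + 1 < m,
      lam i + (t.1 i : ℚ) - (t.2 i : ℚ) ≤
        lam ⟨(i : ℕ) + 1, h⟩ - (t.2 ⟨(i : ℕ) + 1, h⟩ : ℚ)) ∧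
    (∀ h : 0 < m, (0 : ℚ) ≤ lam ⟨0, h⟩ - (t.2 ⟨0, h⟩ : ℚ))}

/-- Pieri number `d^λ_{γ,r}` of type `D_n`. -/
def dPieri {m : ℕ} (γ lam : Fin m → ℚ) (r : ℕ) : ℕ :=
  Nat.card {t : (Fin m → ℕ) × (Fin m → ℕ) //
    (∀ h : 0 < m, min (t.1 ⟨0, h⟩) (t.2 ⟨0, h⟩) = 0) ∧
    (∑ i, (t.1 i + t.2 i)) = r ∧
    (∀ i, ((t.2 i : ℚ) - (t.1 i : ℚ)) = lam i - γ i) ∧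
    (∀ h : 1 < m,
      (t.1 ⟨0, by omega⟩ = 0 →
        lam ⟨0, by omega⟩ ≤ lam ⟨1, h⟩ - (t.2 ⟨1, h⟩ : ℚ)) ∧
      (0 < t.1 ⟨0, by omega⟩ →
        -lam ⟨0, by omega⟩ ≤ lam ⟨1, h⟩ - (t.2 ⟨1, h⟩ : ℚ))) ∧
    (∀ i : Fin m, 1 ≤ (i : ℕ) → ∀ h : (i : ℕ) + 1 < m,
      lam i ≤ lam ⟨(i : ℕ) + 1, h⟩ - (t.2 ⟨(i : ℕ) + 1, h⟩ : ℚ)) ∧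
    (∀ i : Fin m, 1 ≤ (i : ℕ) → ∀ h : (i : ℕ) + 1 < m,
      lam i + (t.1 i : ℚ) - (t.2 i : ℚ) ≤
        lam ⟨(i : ℕ) + 1, h⟩ - (t.2 ⟨(i : ℕ) + 1, h⟩ : ℚ)) ∧
    (∀ h : 1 < m,
      (t.1 ⟨0, by omega⟩ = 0 → 0 ≤ γ ⟨0, by omega⟩ →
        lam ⟨0, by omega⟩ - (t.2 ⟨0, by omega⟩ : ℚ) ≤ lam ⟨1, h⟩ - (t.2 ⟨1, h⟩ : ℚ)) ∧
      (t.2 ⟨0, by omega⟩ = 0 → 0 ≤ γ ⟨0, by omega⟩ →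
        lam ⟨0, by omega⟩ + (t.1 ⟨0, by omega⟩ : ℚ) ≤ lam ⟨1, h⟩ - (t.2 ⟨1, h⟩ : ℚ)) ∧
      (t.2 ⟨0, by omega⟩ = 0 → γ ⟨0, by omega⟩ < 0 →
        -lam ⟨0, by omega⟩ - (t.1 ⟨0, by omega⟩ : ℚ) ≤ lam ⟨1, h⟩ - (t.2 ⟨1, h⟩ : ℚ)) ∧
      (t.1 ⟨0, by omega⟩ = 0 → γ ⟨0, by omega⟩ < 0 →
        -lam ⟨0, by omega⟩ + (t.2 ⟨0, by omega⟩ : ℚ) ≤ lam ⟨1, h⟩ - (t.2 ⟨1, h⟩ : ℚ)))}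

/-- The monomial `x^β = ∏ y_i ^ (2 β_i)` in the Laurent polynomial ring
`ℤ[y_1^{±1}, …, y_n^{±1}]`, realized as the group algebra of `ℤ^n`. -/
def xpow {n : ℕ} (β : Fin n → ℚ) : AddMonoidAlgebra ℤ (Fin n → ℤ) :=
  AddMonoidAlgebra.single (fun i => ⌊2 * β i⌋) 1

/-- The Weyl alternant `a_β = ∑_{σ ∈ W_{B_n}} det σ · x^{σ β}` of type `B_n`. -/
def altB {n : ℕ} (β : Fin n → ℚ) : AddMonoidAlgebra ℤ (Fin n → ℤ) :=
  ∑ σ : Equiv.Perm (Fin n), ∑ ε : Fin n → Bool, wDet σ ε • xpow (wAct σ ε β)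

/-- The Weyl alternant `a_β = ∑_{σ ∈ W_{D_n}} det σ · x^{σ β}` of type `D_n`. -/
def altD {n : ℕ} (β : Fin n → ℚ) : AddMonoidAlgebra ℤ (Fin n → ℤ) :=
  ∑ σ : Equiv.Perm (Fin n), ∑ ε : Fin n → Bool,
    if (∏ i, (if ε i then (-1 : ℤ) else 1)) = 1 then wDet σ ε • xpow (wAct σ ε β) else 0

end

/-!
In a decomposition of a weight with last coordinate `l` into positive roots, the roots with last
coordinate `1` are used exactly `l` times, and in type `C` the remaining root `2 e_n` is used
freely, each time for a factor `q`. These roots restrict to the weights of the vector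
representation of the same type in rank `n - 1` (for type `C`, without `2 e_n`). Let
`S_n(z) = ∑ z^l s_l`, where `s_l` is the sum of the polynomials `K_{λ,0}` over the irreducible
constituents `λ` of the `l`-th symmetric power of the vector representation of rank `n`. Then the
series of row polynomials `∑ z^l K_{(l,0,…,0),0}` of rank `n` is `S_{n-1}(q z)` in types `B` and
`D`, and becomes `S_{n-1}(q z)` after multiplication by `1 - q z²` in type `C`.

On the other hand, straightening alternants by simple reflections, as for the Jacobi-Trudi
determinant, shows that the same series is `(1 - z²) S_n(z)` in types `B` and `D` and `S_n(z)` in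
type `C`. Hence `(1 - c z²) S_n(z) = S_{n-1}(q z)` with `c = 1` in types `B` and `D` and `c = q` in
type `C`. Starting from the ranks in which there are no roots, this recursion determines the even
coefficients: up to a power of `c`, they are Gaussian binomial coefficients in base `q²`. As a
result the three families of row polynomials are the same up to a power of `q`.
-/

noncomputable section RowKostkaFoulkes

open PowerSeries
open scoped AddMonoidAlgebra

local notation "𝐞(" v ")" => (AddMonoidAlgebra.single v 1 : AddMonoidAlgebra ℤ _)

section GeometricSeries

variable {R S : Type*} [CommRing R] [CommRing S]

/-- The geometric series `1 / (1 - a X)`. -/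
def geomSeries (a : R) : R⟦X⟧ := PowerSeries.mk fun k => a ^ k

theorem coeff_geomSeries (a : R) (k : ℕ) : coeff k (geomSeries a) = a ^ k :=
  coeff_mk k _

theorem one_sub_mul_geomSeries (a : R) : (1 - C a * X) * geomSeries a = 1 := by
  ext k
  rw [sub_mul, one_mul, mul_assoc, map_sub, coeff_C_mul]
  cases k with
  | zero => simp [geomSeries]
  | succ k => simp [coeff_succ_X_mul, coeff_geomSeries, pow_succ', coeff_one]

theorem map_geomSeries (f : R →+* S) (a : R) :
    PowerSeries.map f (geomSeries a) = geomSeries (f a) := by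
  ext k
  simp [coeff_geomSeries]

theorem rescale_geomSeries (a b : R) : rescale b (geomSeries a) = geomSeries (b * a) := by
  ext k
  simp [coeff_geomSeries, coeff_rescale, mul_pow]

end GeometricSeries

section SymmetricSeries

variable {V W : Type*} [AddCommMonoid V] [AddCommMonoid W]

/-- The homomorphism `e^v ↦ e^{s v}` of group algebras induced by an additive map `s`. -/
abbrev expMap (s : V →+ W) : ℤ[V] →+* ℤ[W] :=
  AddMonoidAlgebra.mapDomainRingHom ℤ s

theorem expMap_exp (s : V →+ W) (v : V) : expMap s 𝐞(v) = 𝐞(s v) := by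
  simp

theorem expMap_coeff_of_map_eq {s : V →+ V} {U : ℤ[V]⟦X⟧}
    (hU : PowerSeries.map (expMap s) U = U) (k : ℕ) : expMap s (coeff k U) = coeff k U := by
  rw [← coeff_map, hU]

/-- The series `∏_{μ ∈ T} 1 / (1 - e^μ X)`, whose coefficient of `X ^ k` is the complete
homogeneous symmetric polynomial of degree `k` in the exponentials `e^μ`, `μ ∈ T`. -/
def symSeries (T : Finset V) : ℤ[V]⟦X⟧ := ∏ μ ∈ T, geomSeries 𝐞(μ)

theorem map_symSeries (s : V →+ W) (T : Finset V) :
    PowerSeries.map (expMap s) (symSeries T) = ∏ μ ∈ T, geomSeries 𝐞(s μ) := by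
  simp only [symSeries, map_prod, map_geomSeries, expMap_exp]

theorem map_symSeries_of_injective [DecidableEq W] {s : V →+ W} (hs : Function.Injective s)
    (T : Finset V) : PowerSeries.map (expMap s) (symSeries T) = symSeries (T.image s) := by
  rw [map_symSeries, symSeries, Finset.prod_image hs.injOn]

end SymmetricSeries

section ShiftAction

variable {V A : Type*} [AddCommMonoid V]

theorem exp_induction {p : ℤ[V] → Prop} (exp : ∀ v, p 𝐞(v))
    (add : ∀ u w, p u → p w → p (u + w)) (zsmul : ∀ (c : ℤ) u, p u → p (c • u)) (u : ℤ[V]) :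
    p u := by
  induction u using AddMonoidAlgebra.induction_linear with
  | zero => simpa using zsmul 0 _ (exp 0)
  | add u w hu hw => exact add u w hu hw
  | single v c => simpa using zsmul c _ (exp v)

section Function

variable [AddCommGroup A]

variable (V A) in
/-- The shifts `a ↦ a (· + γ)` of functions on `V`, as a representation of `V`. -/
def shiftHom : Multiplicative V →* Module.End ℤ (V → A) where
  toFun γ := LinearMap.funLeft ℤ A (· + γ.toAdd)
  map_one' := by ext; simp
  map_mul' γ δ := by ext; simp [add_left_comm, add_comm]

variable (A) in
/-- The action of the group algebra on functions on `V` in which `e^γ` shifts the argument by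
`γ`: the value of `shiftAct A u a` at `v` is `∑_γ u_γ a (v + γ)`. -/
def shiftAct : ℤ[V] →ₐ[ℤ] Module.End ℤ (V → A) :=
  AddMonoidAlgebra.lift ℤ _ V (shiftHom V A)

theorem shiftAct_exp (γ : V) (a : V → A) (v : V) : shiftAct A 𝐞(γ) a v = a (v + γ) := by
  simp [shiftAct, shiftHom]

theorem shiftAct_mul_exp (u : ℤ[V]) (γ : V) (a : V → A) (v : V) :
    shiftAct A (u * 𝐞(γ)) a v = shiftAct A u a (v + γ) := by
  rw [mul_comm, map_mul, Module.End.mul_apply, shiftAct_exp]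

theorem shiftAct_comp_sub {V : Type*} [AddCommGroup V] (u : ℤ[V]) (a : V → A) (δ : V) :
    shiftAct A u (fun v => a (v - δ)) = fun v => shiftAct A u a (v - δ) := by
  have h : (fun v => a (v - δ)) = shiftAct A 𝐞(-δ) a := by
    ext v
    rw [shiftAct_exp, sub_eq_add_neg]
  ext v
  rw [h, ← Module.End.mul_apply, ← map_mul, shiftAct_mul_exp, sub_eq_add_neg]

theorem shiftAct_comp (s : V →+ V) (u : ℤ[V]) (a : V → A) :
    shiftAct A u (a ∘ s) = shiftAct A (expMap s u) a ∘ s := by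
  induction u using exp_induction with
  | exp γ => ext v; simp only [expMap_exp, Function.comp_apply, shiftAct_exp, map_add]
  | add u w hu hw => simp only [map_add, LinearMap.add_apply, hu, hw]; rfl
  | zsmul c u hu => simp only [map_zsmul, LinearMap.smul_apply, hu]; rfl

end Function

section Series

variable [CommRing A]

/-- The action of `shiftAct` coefficient by coefficient: the coefficient of `X ^ k` of
`shiftSeries U a v` is `shiftAct A (coeff k U) a v`. -/
def shiftSeries (U : ℤ[V]⟦X⟧) (a : V → A) (v : V) : A⟦X⟧ :=
  PowerSeries.mk fun k => shiftAct A (coeff k U) a v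

theorem coeff_shiftSeries (k : ℕ) (U : ℤ[V]⟦X⟧) (a : V → A) (v : V) :
    coeff k (shiftSeries U a v) = shiftAct A (coeff k U) a v :=
  coeff_mk k _

theorem shiftSeries_one (a : V → A) (v : V) : shiftSeries 1 a v = C (a v) := by
  ext k
  rw [coeff_shiftSeries, coeff_one, coeff_C]
  split_ifs <;> simp

theorem shiftSeries_geomSeries_exp (γ : V) (a : V → A) (v : V) (k : ℕ) :
    coeff k (shiftSeries (geomSeries 𝐞(γ)) a v) = a (v + k • γ) := by
  simp only [coeff_shiftSeries, coeff_geomSeries, AddMonoidAlgebra.single_pow, one_pow,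
    shiftAct_exp]

theorem shiftSeries_one_sub_mul (U : ℤ[V]⟦X⟧) (a : V → A) (v μ : V) :
    shiftSeries ((1 - C 𝐞(μ) * X) * U) a v =
      shiftSeries U a v - X * shiftSeries U a (v + μ) := by
  ext k
  rw [sub_mul, one_mul, mul_assoc, ← mul_assoc, mul_comm (C _), mul_assoc X]
  cases k with
  | zero => simp only [coeff_shiftSeries, map_sub, coeff_zero_X_mul, sub_zero]
  | succ k =>
    simp only [coeff_shiftSeries, map_sub, coeff_succ_X_mul, coeff_C_mul, LinearMap.sub_apply,
      Pi.sub_apply, mul_comm 𝐞(μ), shiftAct_mul_exp]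

variable {a : V → A} {s : V →+ V} (ha : ∀ v, a (s v) = -a v) {U : ℤ[V]⟦X⟧}
  (hU : PowerSeries.map (expMap s) U = U)

include ha hU

theorem shiftSeries_reflection (v : V) : shiftSeries U a (s v) = -shiftSeries U a v := by
  have ha' : a ∘ s = -a := funext ha
  ext k
  have h := congrFun (shiftAct_comp s (coeff k U) a) v
  rw [ha', map_neg, expMap_coeff_of_map_eq hU] at h
  simpa [coeff_shiftSeries] using h.symm

variable [IsAddTorsionFree A]

theorem shiftSeries_eq_zero {v : V} (hv : s v = v) : shiftSeries U a v = 0 := by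
  ext k
  have h := congrArg (coeff k) (shiftSeries_reflection ha hU v)
  rw [hv, map_neg, self_eq_neg] at h
  simpa using h

theorem shiftSeries_one_sub_mul_of_fixed {v μ : V} (hv : s (v + μ) = v + μ) :
    shiftSeries ((1 - C 𝐞(μ) * X) * U) a v = shiftSeries U a v := by
  rw [shiftSeries_one_sub_mul, shiftSeries_eq_zero ha hU hv, mul_zero, sub_zero]

end Series

end ShiftAction

section WeightCoefficient

variable {V : Type*} [AddCommGroup V]

/-- The coefficient of `e^β` in a series over the group algebra, itself a series in `X`. -/
def weightCoeff (U : ℤ[V]⟦X⟧) (β : V) : ℤ⟦X⟧ :=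
  PowerSeries.mk fun k => (coeff k U).coeff β

theorem coeff_weightCoeff (k : ℕ) (U : ℤ[V]⟦X⟧) (β : V) :
    coeff k (weightCoeff U β) = (coeff k U).coeff β :=
  coeff_mk k _

theorem coeff_mul_exp (u : ℤ[V]) (β γ : V) : (u * 𝐞(γ)).coeff β = u.coeff (β - γ) := by
  rw [AddMonoidAlgebra.coeff_mul_single_apply, mul_one, sub_eq_add_neg]

theorem weightCoeff_one_sub_mul (U : ℤ[V]⟦X⟧) (α β : V) :
    weightCoeff ((1 - C 𝐞(α) * X) * U) β = weightCoeff U β - X * weightCoeff U (β - α) := by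
  ext k
  rw [sub_mul, one_mul, mul_assoc, ← mul_assoc, mul_comm (C _), mul_assoc X]
  cases k with
  | zero => simp only [coeff_weightCoeff, map_sub, coeff_zero_X_mul, sub_zero]
  | succ k =>
    simp only [coeff_weightCoeff, map_sub, coeff_succ_X_mul, coeff_C_mul, mul_comm 𝐞(α),
      AddMonoidAlgebra.coeff_sub, Finsupp.sub_apply, coeff_mul_exp]

/-- Extracting the coefficient of `e^β` from a product with `e^γ` shifts `β` by `-γ`, whence the
change of sign. -/
theorem weightCoeff_mul_C (U : ℤ[V]⟦X⟧) (h : ℤ[V]) (β : V) :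
    weightCoeff (U * C (expMap (-AddMonoidHom.id V) h)) β =
      shiftAct ℤ⟦X⟧ h (weightCoeff U) β := by
  induction h using exp_induction with
  | exp γ =>
    ext k
    simp [shiftAct_exp, coeff_weightCoeff, AddMonoidAlgebra.coeff_mul_single_apply]
  | add h g hh hg =>
    rw [map_add, map_add (shiftAct _), LinearMap.add_apply, Pi.add_apply, ← hh, ← hg]
    ext k
    simp [coeff_weightCoeff, mul_add]
  | zsmul c h hh =>
    rw [map_zsmul, map_zsmul (shiftAct _), LinearMap.smul_apply, Pi.smul_apply, ← hh]
    ext k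
    simp only [coeff_weightCoeff, mul_smul_comm, map_zsmul, AddMonoidAlgebra.coeff_smul,
      Finsupp.smul_apply]

end WeightCoefficient

section KostantPartition

variable {n : ℕ}

theorem kostantQ_eq_weightCoeff (R : Finset (Fin n → ℚ)) (β : Fin n → ℚ) :
    kostantQ R β = weightCoeff (symSeries R) β := by
  ext k
  have hcoeff (m : {α // α ∈ R} →₀ ℕ) :
      (∏ α, coeff (m α) (geomSeries 𝐞((α : Fin n → ℚ)))).coeff β =
        if ∑ α, (m α : ℚ) • (α : Fin n → ℚ) = β then 1 else 0 := by
    simp [coeff_geomSeries, AddMonoidAlgebra.single_pow, AddMonoidAlgebra.prod_single,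
      Finsupp.single_apply, Nat.cast_smul_eq_nsmul]
  rw [kostantQ, coeff_mk, coeff_weightCoeff, symSeries, ← Finset.prod_coe_sort, coeff_prod,
    AddMonoidAlgebra.coeff_sum, Finsupp.finsetSum_apply,
    Finset.sum_congr rfl fun m _ => hcoeff m, Finset.sum_boole, ← Nat.card_eq_finsetCard]
  refine congrArg _ (Nat.card_congr (Equiv.subtypeEquiv Finsupp.equivFunOnFinite.symm fun m => ?_))
  rw [Finset.mem_filter, Finset.mem_finsuppAntidiag]
  simp

theorem kostantQ_empty (β : Fin n → ℚ) : kostantQ ∅ β = if β = 0 then 1 else 0 := by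
  ext k
  rw [kostantQ_eq_weightCoeff, coeff_weightCoeff, symSeries, Finset.prod_empty, coeff_one]
  split_ifs <;> simp_all [AddMonoidAlgebra.one_def, coeff_one]

theorem kostantQ_insert {R : Finset (Fin n → ℚ)} {α : Fin n → ℚ} (hα : α ∉ R)
    (β : Fin n → ℚ) :
    kostantQ (insert α R) β = kostantQ R β + X * kostantQ (insert α R) (β - α) := by
  have h : symSeries R = (1 - C 𝐞(α) * X) * symSeries (insert α R) := by
    rw [symSeries, symSeries, Finset.prod_insert hα, ← mul_assoc, one_sub_mul_geomSeries, one_mul]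
  simp only [kostantQ_eq_weightCoeff]
  rw [h, weightCoeff_one_sub_mul, sub_add_cancel]

theorem kostantQ_eq_zero_of_neg {R : Finset (Fin n → ℚ)} {β : Fin n → ℚ} (i : Fin n)
    (hR : ∀ α ∈ R, 0 ≤ α i) (hβ : β i < 0) : kostantQ R β = 0 := by
  ext k
  have : IsEmpty {m : {α // α ∈ R} → ℕ //
      (∑ α, m α) = k ∧ (∑ α, (m α : ℚ) • (α : Fin n → ℚ)) = β} := by
    refine ⟨fun ⟨m, _, hm⟩ => hβ.not_ge ?_⟩
    rw [← hm, Finset.sum_apply]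
    exact Finset.sum_nonneg fun α _ => mul_nonneg (Nat.cast_nonneg _) (hR α α.2)
  rw [kostantQ, coeff_mk, Nat.card_of_isEmpty, Nat.cast_zero, map_zero]

end KostantPartition

section Branching

variable {n : ℕ}

/-- The embedding of weights of rank `n` into weights of rank `n + 1` with last coordinate `0`. -/
def snocZero (n : ℕ) : (Fin n → ℚ) →+ (Fin (n + 1) → ℚ) where
  toFun v := Fin.snoc v 0
  map_zero' := funext <| Fin.lastCases (by simp) (by simp)
  map_add' _ _ := funext <| Fin.lastCases (by simp) (by simp)

theorem snocZero_apply (v : Fin n → ℚ) : snocZero n v = Fin.snoc v 0 := rfl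

theorem snoc_eq_snocZero_add (v : Fin n → ℚ) (c : ℚ) :
    (Fin.snoc v c : Fin (n + 1) → ℚ) = snocZero n v + Pi.single (Fin.last n) c :=
  funext <| Fin.lastCases (by simp [snocZero_apply])
    fun i => by simp [snocZero_apply, (Fin.castSucc_lt_last i).ne]

theorem snocZero_injective : Function.Injective (snocZero n) :=
  fun v w h => (Fin.snoc_inj.mp (show (Fin.snoc v 0 : Fin (n + 1) → ℚ) = Fin.snoc w 0 from h)).1

theorem snoc_one_injective :
    Function.Injective fun v : Fin n → ℚ => (Fin.snoc v 1 : Fin (n + 1) → ℚ) :=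
  fun _ _ h => (Fin.snoc_inj.mp h).1

/-- The set of roots of rank `n + 1` obtained from roots `R` and weights `T` of rank `n`: the
roots in `R` get last coordinate `0`, the weights in `T` get last coordinate `1`. -/
def liftRoots (R T : Finset (Fin n → ℚ)) : Finset (Fin (n + 1) → ℚ) :=
  R.image (snocZero n) ∪ T.image fun v => Fin.snoc v 1

theorem liftRoots_last_nonneg {R T : Finset (Fin n → ℚ)} :
    ∀ α ∈ liftRoots R T, 0 ≤ α (Fin.last n) := by
  simp [liftRoots, or_imp, forall_and, snocZero_apply]

theorem symSeries_liftRoots (R T : Finset (Fin n → ℚ)) :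
    symSeries (liftRoots R T) =
      PowerSeries.map (expMap (snocZero n)) (symSeries R) *
        rescale 𝐞(Pi.single (Fin.last n) (1 : ℚ))
          (PowerSeries.map (expMap (snocZero n)) (symSeries T)) := by
  have hdisj : Disjoint (R.image (snocZero n)) (T.image fun v => Fin.snoc v 1) := by
    simp [Finset.disjoint_left, snocZero_apply, Fin.snoc_inj]
  rw [map_symSeries, map_symSeries, symSeries, liftRoots, Finset.prod_union hdisj,
    Finset.prod_image snocZero_injective.injOn, Finset.prod_image snoc_one_injective.injOn,
    map_prod]
  simp only [rescale_geomSeries, AddMonoidAlgebra.single_mul_single, mul_one,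
    snoc_eq_snocZero_add, add_comm]

theorem coeff_expMap_snocZero (u : ℤ[Fin n → ℚ]) (v : Fin n → ℚ) (c : ℚ) :
    (expMap (snocZero n) u).coeff (Fin.snoc v c) = if c = 0 then u.coeff v else 0 := by
  have h : (expMap (snocZero n) u).coeff = Finsupp.mapDomain (snocZero n) u.coeff := by simp
  rw [h]
  split_ifs with hc
  · rw [hc, ← snocZero_apply, Finsupp.mapDomain_apply snocZero_injective]
  · apply Finsupp.mapDomain_of_notMem_range
    rintro ⟨w, hw⟩
    rw [snocZero_apply, Fin.snoc_inj] at hw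
    exact hc hw.2.symm

theorem weightCoeff_snoc (U W : ℤ[Fin n → ℚ]⟦X⟧) (β : Fin n → ℚ) (l : ℕ) :
    weightCoeff (PowerSeries.map (expMap (snocZero n)) U *
        rescale 𝐞(Pi.single (Fin.last n) (1 : ℚ)) (PowerSeries.map (expMap (snocZero n)) W))
        (Fin.snoc β (l : ℚ)) =
      X ^ l * weightCoeff (U * C (coeff l W)) β := by
  ext k
  rw [mul_comm (X ^ l), coeff_mul, coeff_weightCoeff, coeff_mul, AddMonoidAlgebra.coeff_sum,
    Finsupp.finsetSum_apply]
  refine Finset.sum_congr rfl fun p _ => ?_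
  have hlast : (Fin.snoc β (l : ℚ) : Fin (n + 1) → ℚ) - p.2 • Pi.single (Fin.last n) 1 =
      Fin.snoc β ((l : ℚ) - p.2) := by
    rw [snoc_eq_snocZero_add, snoc_eq_snocZero_add, add_sub_assoc, ← Pi.single_smul,
      ← Pi.single_sub, nsmul_one]
  rw [coeff_rescale, coeff_map, coeff_map, AddMonoidAlgebra.single_pow, one_pow,
    mul_comm 𝐞(_), ← mul_assoc, ← map_mul, coeff_mul_exp, hlast, coeff_expMap_snocZero,
    coeff_weightCoeff, coeff_mul_C, coeff_X_pow]
  obtain h | h := eq_or_ne p.2 l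
  · simp [h]
  · rw [if_neg (sub_ne_zero.mpr (Nat.cast_injective.ne h.symm)), if_neg h, mul_zero]

/-- Branching: the roots with last coordinate `1` are used exactly `l` times in a decomposition
of a weight with last coordinate `l`. -/
theorem kostantQ_liftRoots (R : Finset (Fin n → ℚ)) {T : Finset (Fin n → ℚ)}
    (hT : PowerSeries.map (expMap (-AddMonoidHom.id _)) (symSeries T) = symSeries T)
    (β : Fin n → ℚ) (l : ℕ) :
    kostantQ (liftRoots R T) (Fin.snoc β (l : ℚ)) =
      X ^ l * shiftAct ℤ⟦X⟧ (coeff l (symSeries T)) (kostantQ R) β := by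
  have hR : weightCoeff (symSeries R) = kostantQ R :=
    funext fun γ => (kostantQ_eq_weightCoeff R γ).symm
  rw [kostantQ_eq_weightCoeff, symSeries_liftRoots, weightCoeff_snoc, ← hR, ← weightCoeff_mul_C,
    expMap_coeff_of_map_eq hT]

end Branching

section RootSets

variable {n : ℕ}

/-- The weights `±e_i` of the vector representation of the even orthogonal and the symplectic
Lie algebras. -/
def vectorWeights (n : ℕ) : Finset (Fin n → ℚ) :=
  Finset.univ.image (fun i => Pi.single i 1) ∪ Finset.univ.image (fun i => -Pi.single i 1)

theorem snoc_sub_snoc (v w : Fin n → ℚ) (a b : ℚ) :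
    (Fin.snoc v a - Fin.snoc w b : Fin (n + 1) → ℚ) = Fin.snoc (v - w) (a - b) :=
  funext <| Fin.lastCases (by simp) (by simp)

theorem snoc_add_snoc (v w : Fin n → ℚ) (a b : ℚ) :
    (Fin.snoc v a + Fin.snoc w b : Fin (n + 1) → ℚ) = Fin.snoc (v + w) (a + b) :=
  funext <| Fin.lastCases (by simp) (by simp)

theorem single_castSucc (i : Fin n) (c : ℚ) :
    (Pi.single i.castSucc c : Fin (n + 1) → ℚ) = Fin.snoc (Pi.single i c) 0 :=
  funext <| Fin.lastCases (by simp [(Fin.castSucc_lt_last i).ne'])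
    fun j => by simp [Pi.single_apply]

theorem single_last (c : ℚ) : (Pi.single (Fin.last n) c : Fin (n + 1) → ℚ) = Fin.snoc 0 c := by
  rw [snoc_eq_snocZero_add, map_zero, zero_add]

theorem image_single_univ_succ (n : ℕ) (c : ℚ) :
    (Finset.univ.image fun i : Fin (n + 1) => (Pi.single i c : Fin (n + 1) → ℚ)) =
      insert (Pi.single (Fin.last n) c)
        ((Finset.univ.image fun i : Fin n => Pi.single i c).image (snocZero n)) := by
  ext α
  simp [Fin.exists_fin_succ', single_castSucc, snocZero_apply, or_comm, eq_comm]

theorem rootsD_succ (n : ℕ) : rootsD (n + 1) = liftRoots (rootsD n) (vectorWeights n) := by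
  ext α
  simp only [rootsD, liftRoots, vectorWeights, Finset.mem_union, Finset.mem_image,
    Finset.mem_filter, Finset.mem_univ, true_and, Prod.exists, Fin.exists_fin_succ',
    Fin.castSucc_lt_castSucc_iff, Fin.castSucc_lt_last, (Fin.le_last _).not_gt, false_and,
    or_false, single_castSucc, single_last, snoc_sub_snoc, snoc_add_snoc, snocZero_apply,
    sub_self, zero_sub, sub_zero, add_zero, zero_add, or_and_right, exists_or, ↓existsAndEq,
    and_true]
  grind

theorem rootsB_succ (n : ℕ) :
    rootsB (n + 1) = liftRoots (rootsB n) (insert 0 (vectorWeights n)) := by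
  rw [rootsB, rootsD_succ, image_single_univ_succ, liftRoots, liftRoots, rootsB,
    Finset.image_union, Finset.image_insert, ← single_last, Finset.union_insert,
    Finset.union_insert, Finset.union_right_comm]

theorem rootsC_succ (n : ℕ) :
    rootsC (n + 1) = insert (Pi.single (Fin.last n) 2)
      (liftRoots (rootsC n) (vectorWeights n)) := by
  rw [rootsC, rootsD_succ, image_single_univ_succ, liftRoots, liftRoots, rootsC,
    Finset.image_union, Finset.union_insert, Finset.union_right_comm]

end RootSets

section SignedPermutations

variable {n : ℕ}

/-- The action `wAct` of a signed permutation as an additive map. -/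
def wHom (σ : Equiv.Perm (Fin n)) (ε : Fin n → Bool) : (Fin n → ℚ) →+ (Fin n → ℚ) where
  toFun := wAct σ ε
  map_zero' := funext fun i => by simp [wAct]
  map_add' v w := funext fun i => by simp [wAct, mul_add]

theorem wHom_apply (σ : Equiv.Perm (Fin n)) (ε : Fin n → Bool) (v : Fin n → ℚ) (i : Fin n) :
    wHom σ ε v i = (if ε i then -1 else 1) * v (σ⁻¹ i) := rfl

theorem wHom_single (σ : Equiv.Perm (Fin n)) (ε : Fin n → Bool) (i : Fin n) (c : ℚ) :
    wHom σ ε (Pi.single i c) = Pi.single (σ i) (if ε (σ i) then -c else c) := by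
  ext j
  rw [wHom_apply]
  obtain rfl | hj := eq_or_ne j (σ i)
  · cases h : ε (σ i) <;> simp
  · have hj' : σ⁻¹ j ≠ i := fun h => hj (Equiv.Perm.inv_eq_iff_eq.mp h)
    rw [Pi.single_eq_of_ne hj', Pi.single_eq_of_ne hj, mul_zero]

theorem wHom_wHom (σ τ : Equiv.Perm (Fin n)) (ε δ : Fin n → Bool) (v : Fin n → ℚ) :
    wHom σ ε (wHom τ δ v) = wHom (σ * τ) (fun i => xor (ε i) (δ (σ⁻¹ i))) v := by
  ext i
  simp only [wHom_apply, mul_inv_rev, Equiv.Perm.mul_apply]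
  cases ε i <;> cases δ (σ⁻¹ i) <;> simp

theorem wHom_injective (σ : Equiv.Perm (Fin n)) (ε : Fin n → Bool) :
    Function.Injective (wHom σ ε) := by
  intro v w h
  ext i
  have hi := congrFun h (σ i)
  rw [wHom_apply, wHom_apply, Equiv.Perm.inv_def, Equiv.symm_apply_apply] at hi
  exact mul_left_cancel₀ (by split_ifs <;> simp) hi

theorem neg_eq_wHom : -AddMonoidHom.id (Fin n → ℚ) = wHom 1 fun _ => true := by
  refine AddMonoidHom.ext fun v => funext fun i => ?_
  simp [wHom_apply]

/-- The product of the signs `±1` encoded by `ε`, where `true` stands for `-1`. -/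
def signProd (ε : Fin n → Bool) : ℤ := ∏ i, if ε i then -1 else 1

theorem signProd_xor (σ : Equiv.Perm (Fin n)) (ε δ : Fin n → Bool) :
    signProd (fun i => xor (ε i) (δ (σ⁻¹ i))) = signProd ε * signProd δ := by
  rw [signProd, signProd, signProd, ← Equiv.prod_comp σ⁻¹ fun i => if δ i then (-1 : ℤ) else 1,
    ← Finset.prod_mul_distrib]
  refine Finset.prod_congr rfl fun i _ => ?_
  cases ε i <;> cases δ (σ⁻¹ i) <;> simp

theorem signProd_mem (s : Finset (Fin n)) :
    signProd (fun i => decide (i ∈ s)) = (-1) ^ s.card := by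
  simp [signProd, Finset.prod_ite_mem]

theorem signProd_mul_self (ε : Fin n → Bool) : signProd ε * signProd ε = 1 := by
  rw [signProd, ← Finset.prod_mul_distrib]
  exact Finset.prod_eq_one fun i _ => by split_ifs <;> simp

theorem image_wHom_vectorWeights (σ : Equiv.Perm (Fin n)) (ε : Fin n → Bool) :
    (vectorWeights n).image (wHom σ ε) = vectorWeights n := by
  refine Finset.eq_of_subset_of_card_le (Finset.image_subset_iff.mpr ?_)
    (Finset.card_image_of_injective _ (wHom_injective σ ε)).ge
  simp only [vectorWeights, Finset.mem_union, Finset.mem_image, Finset.mem_univ, true_and]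
  rintro _ (⟨i, rfl⟩ | ⟨i, rfl⟩)
  · rw [wHom_single]
    split_ifs
    exacts [.inr ⟨σ i, (Pi.single_neg ..).symm⟩, .inl ⟨σ i, rfl⟩]
  · rw [← Pi.single_neg, wHom_single, neg_neg]
    split_ifs
    exacts [.inl ⟨σ i, rfl⟩, .inr ⟨σ i, (Pi.single_neg ..).symm⟩]

/-- The generating series of the characters of the symmetric powers of the vector representation
of the even orthogonal and the symplectic Lie algebras. -/
def vectorSeries (n : ℕ) : ℤ[Fin n → ℚ]⟦X⟧ := symSeries (vectorWeights n)

theorem map_vectorSeries (σ : Equiv.Perm (Fin n)) (ε : Fin n → Bool) :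
    PowerSeries.map (expMap (wHom σ ε)) (vectorSeries n) = vectorSeries n := by
  rw [vectorSeries, map_symSeries_of_injective (wHom_injective σ ε), image_wHom_vectorWeights]

end SignedPermutations

section WeylSums

variable {n : ℕ} {M : Type*} [AddCommGroup M]

/-- The sum of `sgn σ · ω (∏ signs) · f (w v)` over the signed permutations `w = (σ, signs)`. For
`ω = id` this is the alternating sum over the Weyl groups of types `B` and `C`, for
`ω = evenIndicator` the one over the Weyl group of type `D`. -/
def weylSum (ω : ℤ → ℤ) (f : (Fin n → ℚ) → M) : (Fin n → ℚ) → M :=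
  ∑ σ : Equiv.Perm (Fin n), ∑ ε : Fin n → Bool,
    ((Equiv.Perm.sign σ : ℤ) * ω (signProd ε)) • (f ∘ wHom σ ε)

/-- The indicator function of `1`, which cuts out the even sign changes. -/
def evenIndicator (x : ℤ) : ℤ := if x = 1 then 1 else 0

theorem weylSum_apply (ω : ℤ → ℤ) (f : (Fin n → ℚ) → M) (v : Fin n → ℚ) :
    weylSum ω f v = ∑ σ : Equiv.Perm (Fin n), ∑ ε : Fin n → Bool,
      ((Equiv.Perm.sign σ : ℤ) * ω (signProd ε)) • f (wHom σ ε v) := by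
  simp only [weylSum, Finset.sum_apply, Pi.smul_apply, Function.comp_apply]

theorem weylSum_add (ω : ℤ → ℤ) (f g : (Fin n → ℚ) → M) (v : Fin n → ℚ) :
    weylSum ω (fun w => f w + g w) v = weylSum ω f v + weylSum ω g v := by
  simp only [weylSum_apply, smul_add, Finset.sum_add_distrib]

theorem weylSum_mul_left {A : Type*} [Ring A] (ω : ℤ → ℤ) (c : A) (f : (Fin n → ℚ) → A)
    (v : Fin n → ℚ) : weylSum ω (fun w => c * f w) v = c * weylSum ω f v := by
  simp only [weylSum_apply, Finset.mul_sum, mul_smul_comm]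

theorem sum_mul_right_xor (τ : Equiv.Perm (Fin n)) (δ : Fin n → Bool)
    (g : Equiv.Perm (Fin n) → (Fin n → Bool) → M) :
    ∑ σ, ∑ ε : Fin n → Bool, g (σ * τ) (fun i => xor (ε i) (δ (σ⁻¹ i))) = ∑ σ, ∑ ε, g σ ε := by
  rw [← Equiv.sum_comp (Equiv.mulRight τ) fun σ => ∑ ε, g σ ε]
  refine Finset.sum_congr rfl fun σ _ => ?_
  have hinv : Function.Involutive fun (ε : Fin n → Bool) i => xor (ε i) (δ (σ⁻¹ i)) :=
    fun ε => by simp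
  exact Equiv.sum_comp hinv.toPerm fun ε => g (σ * τ) ε

theorem weylSum_wHom {ω : ℤ → ℤ} {c : ℤ} {δ : Fin n → Bool}
    (hω : ∀ x, ω (x * signProd δ) = c * ω x) (τ : Equiv.Perm (Fin n))
    (f : (Fin n → ℚ) → M) (v : Fin n → ℚ) :
    weylSum ω f (wHom τ δ v) = ((Equiv.Perm.sign τ : ℤ) * c) • weylSum ω f v := by
  simp only [weylSum_apply, Finset.smul_sum, wHom_wHom]
  refine Eq.trans ?_ (sum_mul_right_xor τ δ _)
  refine Finset.sum_congr rfl fun σ _ => Finset.sum_congr rfl fun ε _ => ?_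
  have hsign : (Equiv.Perm.sign τ : ℤ) * Equiv.Perm.sign τ = 1 := by
    rw [← Units.val_mul, Int.units_mul_self, Units.val_one]
  have hε : ω (signProd ε) = c * ω (signProd ε * signProd δ) := by
    rw [← hω, mul_assoc, signProd_mul_self, mul_one]
  rw [smul_smul, signProd_xor, hε, Equiv.Perm.sign_mul, Units.val_mul]
  congr 1
  linear_combination -(Equiv.Perm.sign σ * c * ω (signProd ε * signProd δ) : ℤ) * hsign

/-- The reflection exchanging the coordinates `i` and `j`. -/
abbrev swapHom (i j : Fin n) : (Fin n → ℚ) →+ (Fin n → ℚ) :=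
  wHom (Equiv.swap i j) fun _ => false

/-- The reflection exchanging the coordinates `i` and `j` and their signs. -/
abbrev swapNegHom (i j : Fin n) : (Fin n → ℚ) →+ (Fin n → ℚ) :=
  wHom (Equiv.swap i j) fun k => decide (k ∈ ({i, j} : Finset (Fin n)))

/-- The reflection changing the sign of the coordinate `i`. -/
abbrev negHom (i : Fin n) : (Fin n → ℚ) →+ (Fin n → ℚ) :=
  wHom 1 fun k => decide (k ∈ ({i} : Finset (Fin n)))

theorem weylSum_swapHom (ω : ℤ → ℤ) (f : (Fin n → ℚ) → M) {i j : Fin n} (hij : i ≠ j)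
    (v : Fin n → ℚ) : weylSum ω f (swapHom i j v) = -weylSum ω f v := by
  rw [weylSum_wHom (c := 1) (fun x => by simp [signProd]), Equiv.Perm.sign_swap hij]
  simp

theorem weylSum_swapNegHom (ω : ℤ → ℤ) (f : (Fin n → ℚ) → M) {i j : Fin n} (hij : i ≠ j)
    (v : Fin n → ℚ) : weylSum ω f (swapNegHom i j v) = -weylSum ω f v := by
  rw [weylSum_wHom (c := 1) (fun x => by rw [signProd_mem, Finset.card_pair hij]; simp),
    Equiv.Perm.sign_swap hij]
  simp

theorem weylSum_negHom (f : (Fin n → ℚ) → M) (i : Fin n) (v : Fin n → ℚ) :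
    weylSum id f (negHom i v) = -weylSum id f v := by
  rw [weylSum_wHom (c := -1) (fun x => by rw [signProd_mem]; simp)]
  simp

theorem shiftAct_weylSum {h : ℤ[Fin n → ℚ]} (hh : ∀ σ ε, expMap (wHom σ ε) h = h)
    (ω : ℤ → ℤ) (f : (Fin n → ℚ) → M) :
    shiftAct M h (weylSum ω f) = weylSum ω (shiftAct M h f) := by
  simp only [weylSum, map_sum, map_zsmul, shiftAct_comp, hh]

end WeylSums

section WeylSumReduction

variable {n : ℕ} {M : Type*} [AddCommGroup M]

/-- The extension of a permutation of `Fin n` to `Fin (n + 1)` fixing the last point. -/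
def extendPerm (σ : Equiv.Perm (Fin n)) : Equiv.Perm (Fin (n + 1)) :=
  finSuccEquivLast.symm.permCongr (Equiv.optionCongr σ)

theorem extendPerm_inv_castSucc (σ : Equiv.Perm (Fin n)) (i : Fin n) :
    (extendPerm σ)⁻¹ i.castSucc = (σ⁻¹ i).castSucc := by
  rw [Equiv.Perm.inv_eq_iff_eq]
  simp [extendPerm, Equiv.permCongr_apply]

theorem extendPerm_inv_last (σ : Equiv.Perm (Fin n)) :
    (extendPerm σ)⁻¹ (Fin.last n) = Fin.last n := by
  rw [Equiv.Perm.inv_eq_iff_eq]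
  simp [extendPerm, Equiv.permCongr_apply]

theorem sign_extendPerm (σ : Equiv.Perm (Fin n)) :
    Equiv.Perm.sign (extendPerm σ) = Equiv.Perm.sign σ := by
  simp [extendPerm, Equiv.Perm.sign_permCongr]

theorem signProd_snoc_false (ε : Fin n → Bool) :
    signProd (Fin.snoc ε false : Fin (n + 1) → Bool) = signProd ε := by
  simp [signProd, Fin.prod_univ_castSucc]

theorem wHom_extendPerm (σ : Equiv.Perm (Fin n)) (ε : Fin n → Bool) (v : Fin n → ℚ) (c : ℚ) :
    wHom (extendPerm σ) (Fin.snoc ε false) (Fin.snoc v c) = Fin.snoc (wHom σ ε v) c :=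
  funext <| Fin.lastCases (by simp [wHom_apply, extendPerm_inv_last])
    fun i => by simp [wHom_apply, extendPerm_inv_castSucc]

theorem sum_perm_eq_sum_extendPerm (g : Equiv.Perm (Fin (n + 1)) → M)
    (hg : ∀ σ, σ⁻¹ (Fin.last n) ≠ Fin.last n → g σ = 0) :
    ∑ σ, g σ = ∑ σ : Equiv.Perm (Fin n), g (extendPerm σ) := by
  rw [← Equiv.sum_comp ((Equiv.Perm.decomposeOption (α := Fin n)).symm.trans
    finSuccEquivLast.symm.permCongr) g, Fintype.sum_prod_type, Fintype.sum_option,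
    Finset.sum_eq_zero (s := (Finset.univ : Finset (Fin n))), add_zero]
  · refine Finset.sum_congr rfl fun σ _ => congrArg g (Equiv.ext fun i => ?_)
    simp [extendPerm, Equiv.permCongr_apply]
  · refine fun i _ => Finset.sum_eq_zero fun σ _ => hg _ fun h => ?_
    rw [Equiv.Perm.inv_eq_iff_eq] at h
    simp [Equiv.permCongr_apply, Equiv.Perm.decomposeOption, (Fin.castSucc_lt_last i).ne'] at h

theorem sum_bool_eq_sum_snoc_false (g : (Fin (n + 1) → Bool) → M)
    (hg : ∀ ε, ε (Fin.last n) = true → g ε = 0) :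
    ∑ ε, g ε = ∑ ε : Fin n → Bool, g (Fin.snoc ε false) := by
  rw [← Equiv.sum_comp (Fin.snocEquiv fun _ => Bool) g, Fintype.sum_prod_type, Fintype.sum_bool,
    Finset.sum_eq_zero fun ε _ => hg _ (by simp [Fin.snocEquiv]), zero_add]
  rfl

/-- A signed permutation that moves or negates the last coordinate, which is the largest one,
takes `Fin.snoc v c` to a weight at which `f` vanishes. -/
theorem weylSum_snoc (ω : ℤ → ℤ) {f : (Fin (n + 1) → ℚ) → M} {b c : ℚ}
    (hf : ∀ w, w (Fin.last n) < b → f w = 0) {v : Fin n → ℚ} (hv : ∀ i, |v i| < b)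
    (hc : -c < b) :
    weylSum ω f (Fin.snoc v c) = weylSum ω (fun w => f (Fin.snoc w c)) v := by
  rw [weylSum_apply, weylSum_apply, sum_perm_eq_sum_extendPerm]
  · refine Finset.sum_congr rfl fun σ _ => ?_
    rw [sum_bool_eq_sum_snoc_false]
    · refine Finset.sum_congr rfl fun ε _ => ?_
      rw [sign_extendPerm, signProd_snoc_false, wHom_extendPerm]
    · intro ε hε
      rw [hf, smul_zero]
      simpa [wHom_apply, hε, extendPerm_inv_last] using hc
  · intro σ hσ
    obtain ⟨i, hi⟩ := Fin.exists_castSucc_eq.mpr hσ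
    refine Finset.sum_eq_zero fun ε _ => ?_
    rw [hf, smul_zero]
    have hvi := abs_lt.mp (hv i)
    rw [wHom_apply, ← hi, Fin.snoc_castSucc]
    split_ifs <;> linarith

end WeylSumReduction

section RowPolynomials

variable {n : ℕ}

/-- The weight with coordinates `r, r + 1, …, r + n - 1`. It is the weight `ρ` of type `B_n`, `C_n`
and `D_n` for `r = 1/2`, `r = 1` and `r = 0`, respectively. -/
def staircase (n : ℕ) (r : ℚ) : Fin n → ℚ := fun i => (i : ℚ) + r

/-- The polynomial `K_{λ,0}` attached to the roots `R`, `ρ = staircase n r` and the Weyl group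
encoded by `ω`, as a function of `λ + ρ`. -/
def altKostant (ω : ℤ → ℤ) (R : Finset (Fin n → ℚ)) (r : ℚ) : (Fin n → ℚ) → ℤ⟦X⟧ :=
  weylSum ω fun v => kostantQ R (v - staircase n r)

/-- The polynomial `K_{(l,0,…,0),0}`. -/
def rowKostant (ω : ℤ → ℤ) (R : Finset (Fin (n + 1) → ℚ)) (r : ℚ) (l : ℕ) : ℤ⟦X⟧ :=
  altKostant ω R r (l • Pi.single (Fin.last n) 1 + staircase (n + 1) r)

/-- The series obtained by applying `shiftSeries U` to `altKostant` at `ρ`. If `coeff l U` is the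
character of a representation, then by Brauer's formula the `l`-th coefficient is the sum of the
polynomials `K_{λ,0}` over the irreducible constituents of that representation. -/
def charKostant (ω : ℤ → ℤ) (R : Finset (Fin n → ℚ)) (r : ℚ) (U : ℤ[Fin n → ℚ]⟦X⟧) :
    ℤ⟦X⟧⟦X⟧ :=
  shiftSeries U (altKostant ω R r) (staircase n r)

theorem KB_zero (lam : Fin n → ℚ) :
    KB n lam 0 = altKostant id (rootsB n) (1 / 2) (lam + staircase n (1 / 2)) := by
  rw [altKostant, weylSum_apply, KB, zero_add]
  rfl

theorem KC_zero (lam : Fin n → ℚ) :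
    KC n lam 0 = altKostant id (rootsC n) 1 (lam + staircase n 1) := by
  rw [altKostant, weylSum_apply, KC, zero_add]
  rfl

theorem KD_zero (lam : Fin n → ℚ) :
    KD n lam 0 = altKostant evenIndicator (rootsD n) 0 (lam + staircase n 0) := by
  have hρ : rhoD n = staircase n 0 := funext fun i => (add_zero _).symm
  rw [altKostant, weylSum_apply, KD, zero_add, hρ]
  refine Finset.sum_congr rfl fun σ _ => Finset.sum_congr rfl fun ε _ => ?_
  rw [evenIndicator, wDet, ← signProd]
  split_ifs with h
  · rw [h]
    rfl
  · rw [mul_zero, zero_smul]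

theorem ite_eq_single_last (n l : ℕ) :
    (fun i : Fin (n + 1) => if (i : ℕ) = n then (l : ℚ) else 0) =
      l • Pi.single (Fin.last n) 1 := by
  ext i
  simp [Pi.single_apply, Fin.ext_iff]

theorem staircase_succ (n : ℕ) (r : ℚ) :
    staircase (n + 1) r = Fin.snoc (staircase n r) ((n : ℚ) + r) :=
  funext <| Fin.lastCases (by simp [staircase]) fun i => by simp [staircase]

theorem abs_staircase_lt {r : ℚ} (hr : 0 ≤ r) (i : Fin n) : |staircase n r i| < n + r := by
  have hi : ((i : ℕ) : ℚ) < n := Nat.cast_lt.mpr i.isLt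
  rw [staircase, abs_of_nonneg (by positivity)]
  exact add_lt_add_left hi r

theorem rowKostant_eq_weylSum (ω : ℤ → ℤ) {R : Finset (Fin (n + 1) → ℚ)}
    (hR : ∀ α ∈ R, 0 ≤ α (Fin.last n)) {r : ℚ} (hr : 0 ≤ r) (hnr : 0 < n + r) (l : ℕ) :
    rowKostant ω R r l =
      weylSum ω (fun v => kostantQ R (Fin.snoc (v - staircase n r) (l : ℚ)))
        (staircase n r) := by
  have hrow : l • Pi.single (Fin.last n) 1 + staircase (n + 1) r =
      Fin.snoc (staircase n r) (l + (n + r)) := by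
    rw [staircase_succ, ← Pi.single_smul, nsmul_one, single_last, snoc_add_snoc, zero_add]
  have hvanish (w : Fin (n + 1) → ℚ) (hw : w (Fin.last n) < n + r) :
      kostantQ R (w - staircase (n + 1) r) = 0 := by
    refine kostantQ_eq_zero_of_neg (Fin.last n) hR ?_
    rwa [staircase_succ, Pi.sub_apply, Fin.snoc_last, sub_neg]
  have hc : -(l + (n + r)) < n + r := by linarith [l.cast_nonneg (α := ℚ)]
  rw [rowKostant, altKostant, hrow, weylSum_snoc ω hvanish (abs_staircase_lt hr) hc]
  simp only [staircase_succ, snoc_sub_snoc, add_sub_cancel_right]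

theorem coeff_charKostant_geomSeries_last (ω : ℤ → ℤ) (R : Finset (Fin (n + 1) → ℚ)) (r : ℚ)
    (l : ℕ) :
    coeff l (charKostant ω R r (geomSeries 𝐞(Pi.single (Fin.last n) 1))) =
      rowKostant ω R r l := by
  rw [charKostant, shiftSeries_geomSeries_exp, rowKostant, add_comm (l • _)]

section LiftRoots

variable (ω : ℤ → ℤ) (R : Finset (Fin n → ℚ)) {T : Finset (Fin n → ℚ)}
  (hT : ∀ σ ε, PowerSeries.map (expMap (wHom σ ε)) (symSeries T) = symSeries T) (r : ℚ)

include hT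

theorem weylSum_kostantQ_liftRoots (l : ℕ) :
    weylSum ω (fun v => kostantQ (liftRoots R T) (Fin.snoc (v - staircase n r) (l : ℚ)))
        (staircase n r) =
      coeff l (rescale X (charKostant ω R r (symSeries T))) := by
  have hneg : PowerSeries.map (expMap (-AddMonoidHom.id (Fin n → ℚ))) (symSeries T) =
      symSeries T := by
    rw [neg_eq_wHom, hT]
  simp only [kostantQ_liftRoots R hneg]
  rw [weylSum_mul_left, coeff_rescale, charKostant, coeff_shiftSeries, altKostant,
    shiftAct_weylSum fun σ ε => expMap_coeff_of_map_eq (hT σ ε) l, shiftAct_comp_sub]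

variable {r} (hr : 0 ≤ r) (hnr : 0 < n + r)

include hr hnr

theorem charKostant_liftRoots :
    charKostant ω (liftRoots R T) r (geomSeries 𝐞(Pi.single (Fin.last n) 1)) =
      rescale X (charKostant ω R r (symSeries T)) := by
  ext1 l
  rw [coeff_charKostant_geomSeries_last,
    rowKostant_eq_weylSum ω liftRoots_last_nonneg hr hnr, weylSum_kostantQ_liftRoots ω R hT]

/-- A decomposition either avoids the additional root or uses it at least once, which accounts
for a factor `q` and lowers the last coordinate by `2`. -/
theorem charKostant_insert_liftRoots :
    (1 - C X * X ^ 2) * charKostant ω (insert (Pi.single (Fin.last n) 2) (liftRoots R T)) r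
        (geomSeries 𝐞(Pi.single (Fin.last n) 1)) =
      rescale X (charKostant ω R r (symSeries T)) := by
  set R' := insert (Pi.single (Fin.last n) 2) (liftRoots R T) with hR'
  have hnotMem : (Pi.single (Fin.last n) 2 : Fin (n + 1) → ℚ) ∉ liftRoots R T := by
    simp [liftRoots, single_last, snocZero_apply, Fin.snoc_inj]
  have hnonneg : ∀ α ∈ R', 0 ≤ α (Fin.last n) :=
    Finset.forall_mem_insert _ _ _ |>.mpr ⟨by simp, liftRoots_last_nonneg⟩
  have hsplit (β : Fin n → ℚ) (c : ℚ) : kostantQ R' (Fin.snoc β c) =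
      kostantQ (liftRoots R T) (Fin.snoc β c) + X * kostantQ R' (Fin.snoc β (c - 2)) := by
    rw [hR', kostantQ_insert hnotMem, single_last, snoc_sub_snoc, sub_zero]
  ext1 l
  rw [sub_mul, one_mul, map_sub, coeff_charKostant_geomSeries_last,
    rowKostant_eq_weylSum ω hnonneg hr hnr, sub_eq_iff_eq_add, mul_assoc, coeff_C_mul,
    coeff_X_pow_mul', ← weylSum_kostantQ_liftRoots ω R hT]
  simp only [hsplit _ (l : ℚ)]
  rw [weylSum_add, weylSum_mul_left]
  congr 2
  split_ifs with hl
  · rw [coeff_charKostant_geomSeries_last, rowKostant_eq_weylSum ω hnonneg hr hnr,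
      Nat.cast_sub hl]
    rfl
  · have hlt : (l : ℚ) - 2 < 0 := sub_neg.mpr (by exact_mod_cast not_le.mp hl)
    have hzero (β : Fin n → ℚ) : kostantQ R' (Fin.snoc β ((l : ℚ) - 2)) = 0 :=
      kostantQ_eq_zero_of_neg (Fin.last n) hnonneg (by rwa [Fin.snoc_last])
    simp only [hzero, weylSum_apply, smul_zero, Finset.sum_const_zero]

end LiftRoots

end RowPolynomials

section JacobiTrudi

variable {n : ℕ} {A : Type*} [CommRing A]

/-- The polynomial `∏_{i ∈ S} (1 - e^{c e_i} X)`. -/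
def linearProd (S : Finset (Fin n)) (c : ℚ) : ℤ[Fin n → ℚ]⟦X⟧ :=
  ∏ i ∈ S, (1 - C 𝐞(Pi.single i c) * X)

theorem linearProd_empty (c : ℚ) : linearProd (∅ : Finset (Fin n)) c = 1 :=
  Finset.prod_empty

theorem linearProd_insert {i : Fin n} {S : Finset (Fin n)} (hi : i ∉ S) (c : ℚ) :
    linearProd (insert i S) c = (1 - C 𝐞(Pi.single i c) * X) * linearProd S c :=
  Finset.prod_insert hi

theorem map_linearProd {s : (Fin n → ℚ) →+ (Fin n → ℚ)} {S : Finset (Fin n)} {c : ℚ}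
    (hs : ∀ i ∈ S, s (Pi.single i c) = Pi.single i c) :
    PowerSeries.map (expMap s) (linearProd S c) = linearProd S c := by
  rw [linearProd, map_prod]
  refine Finset.prod_congr rfl fun i hi => ?_
  rw [map_sub, map_one, map_mul, map_C, map_X, expMap_exp, hs i hi]

theorem map_swapHom_linearProd {i j : Fin n} {S : Finset (Fin n)} (hi : i ∉ S) (hj : j ∉ S)
    (c : ℚ) : PowerSeries.map (expMap (swapHom i j)) (linearProd S c) = linearProd S c := by
  refine map_linearProd fun k hk => ?_
  rw [wHom_single, Equiv.swap_apply_of_ne_of_ne (ne_of_mem_of_not_mem hk hi)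
    (ne_of_mem_of_not_mem hk hj)]
  rfl

theorem swapHom_eq_self {i j : Fin n} {v : Fin n → ℚ} (h : v i = v j) : swapHom i j v = v := by
  ext k
  rw [wHom_apply, Equiv.swap_inv, Equiv.swap_apply_def]
  split_ifs <;> simp_all

section Swap

variable [IsAddTorsionFree A] {a : (Fin (n + 1) → ℚ) → A}
  (ha : ∀ i j, i ≠ j → ∀ v, a (swapHom i j v) = -a v) {U : ℤ[Fin (n + 1) → ℚ]⟦X⟧}
  (hU : ∀ i j, PowerSeries.map (expMap (swapHom i j)) U = U) (r : ℚ)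

include ha hU

theorem shiftSeries_linearProd_Iio (k : Fin (n + 1)) :
    shiftSeries (linearProd (.Iio k) 1 * U) a (staircase (n + 1) r) =
      shiftSeries U a (staircase (n + 1) r) := by
  induction k using Fin.induction with
  | zero => rw [← bot_eq_zero (α := Fin (n + 1)), Finset.Iio_bot, linearProd_empty, one_mul]
  | succ k ih =>
    have hIio : Finset.Iio k.succ = insert k.castSucc (.Iio k.castSucc) := by
      ext j
      rw [Finset.Iio_insert, Finset.mem_Iio, Finset.mem_Iic, Fin.lt_def, Fin.le_def,
        Fin.val_succ, Fin.val_castSucc, Nat.lt_succ_iff]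
    have hinv : PowerSeries.map (expMap (swapHom k.castSucc k.succ))
        (linearProd (.Iio k.castSucc) 1 * U) = linearProd (.Iio k.castSucc) 1 * U := by
      rw [map_mul, hU, map_swapHom_linearProd (by simp) (by simp [Fin.le_def])]
    have hfixed : swapHom k.castSucc k.succ (staircase (n + 1) r + Pi.single k.castSucc 1) =
        staircase (n + 1) r + Pi.single k.castSucc 1 :=
      swapHom_eq_self <| by
        simp only [staircase, Pi.add_apply, Pi.single_eq_same, Fin.val_castSucc, Fin.val_succ,
          Pi.single_eq_of_ne (Fin.castSucc_lt_succ (i := k)).ne', Nat.cast_succ]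
        ring
    rw [hIio, linearProd_insert Finset.notMem_Iio_self, mul_assoc,
      shiftSeries_one_sub_mul_of_fixed (ha _ _ (Fin.castSucc_lt_succ (i := k)).ne) hinv hfixed, ih]

theorem shiftSeries_linearProd_Ioi (k : Fin (n + 1)) :
    shiftSeries (linearProd (.Ioi k) (-1) * U) a (staircase (n + 1) r) =
      shiftSeries U a (staircase (n + 1) r) := by
  induction k using Fin.reverseInduction with
  | last => rw [← Fin.top_eq_last, Finset.Ioi_top, linearProd_empty, one_mul]
  | cast k ih =>
    have hIoi : Finset.Ioi k.castSucc = insert k.succ (.Ioi k.succ) := by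
      ext j
      rw [Finset.Ioi_insert, Finset.mem_Ioi, Finset.mem_Ici, Fin.lt_def, Fin.le_def,
        Fin.val_succ, Fin.val_castSucc, Nat.succ_le_iff]
    have hinv : PowerSeries.map (expMap (swapHom k.castSucc k.succ))
        (linearProd (.Ioi k.succ) (-1) * U) = linearProd (.Ioi k.succ) (-1) * U := by
      rw [map_mul, hU, map_swapHom_linearProd (by simp [Fin.le_def]) (by simp)]
    have hfixed : swapHom k.castSucc k.succ (staircase (n + 1) r + Pi.single k.succ (-1)) =
        staircase (n + 1) r + Pi.single k.succ (-1) :=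
      swapHom_eq_self <| by
        simp only [staircase, Pi.add_apply, Pi.single_eq_same, Fin.val_castSucc, Fin.val_succ,
          Pi.single_eq_of_ne (Fin.castSucc_lt_succ (i := k)).ne, Nat.cast_succ]
        ring
    rw [hIoi, linearProd_insert Finset.notMem_Ioi_self, mul_assoc,
      shiftSeries_one_sub_mul_of_fixed (ha _ _ (Fin.castSucc_lt_succ (i := k)).ne) hinv hfixed, ih]

end Swap

theorem linearProd_mul_prod_geomSeries (S : Finset (Fin n)) (c : ℚ) :
    linearProd S c * ∏ i ∈ S, geomSeries 𝐞(Pi.single i c) = 1 := by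
  rw [linearProd, ← Finset.prod_mul_distrib]
  exact Finset.prod_eq_one fun i _ => one_sub_mul_geomSeries _

theorem vectorSeries_eq_prod (n : ℕ) :
    vectorSeries n =
      (∏ i, geomSeries 𝐞(Pi.single i (1 : ℚ))) * ∏ i, geomSeries 𝐞(Pi.single i (-1 : ℚ)) := by
  have hsingle : Function.Injective fun i : Fin n => (Pi.single i 1 : Fin n → ℚ) :=
    fun i j h => by simpa [Pi.single_apply] using congrFun h i
  have hdisj : Disjoint (Finset.univ.image fun i : Fin n => (Pi.single i 1 : Fin n → ℚ))
      (Finset.univ.image fun i : Fin n => -Pi.single i 1) := by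
    simp only [Finset.disjoint_left, Finset.mem_image, Finset.mem_univ, true_and]
    rintro _ ⟨i, rfl⟩ ⟨j, h⟩
    have hi := congrFun h i
    rw [Pi.neg_apply, Pi.single_apply, Pi.single_eq_same] at hi
    split_ifs at hi <;> norm_num at hi
  rw [vectorSeries, symSeries, vectorWeights, Finset.prod_union hdisj,
    Finset.prod_image hsingle.injOn,
    Finset.prod_image fun i _ j _ h => hsingle (neg_injective h)]
  simp only [Pi.single_neg]

theorem map_swapHom_prod_geomSeries (i j : Fin n) :
    PowerSeries.map (expMap (swapHom i j)) (∏ k, geomSeries 𝐞(Pi.single k (1 : ℚ))) =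
      ∏ k, geomSeries 𝐞(Pi.single k (1 : ℚ)) := by
  simp only [map_prod, map_geomSeries, expMap_exp, wHom_single, Bool.false_eq_true, if_false]
  rw [Equiv.prod_comp (Equiv.swap i j) fun k => geomSeries 𝐞(Pi.single k (1 : ℚ))]

/-- Both sides equal the value for the series `∏ 1 / (1 - e^{e_i} X)`. -/
theorem shiftSeries_geomSeries_last [IsAddTorsionFree A] {a : (Fin (n + 1) → ℚ) → A}
    (ha : ∀ i j, i ≠ j → ∀ v, a (swapHom i j v) = -a v) (r : ℚ) :
    shiftSeries (geomSeries 𝐞(Pi.single (Fin.last n) 1)) a (staircase (n + 1) r) =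
      shiftSeries ((1 - C 𝐞(Pi.single 0 (-1)) * X) *
        (linearProd (.Ioi 0) (-1) * vectorSeries (n + 1))) a (staircase (n + 1) r) := by
  set F : ℤ[Fin (n + 1) → ℚ]⟦X⟧ := ∏ i, geomSeries 𝐞(Pi.single i (1 : ℚ)) with hF
  have hlast : geomSeries 𝐞(Pi.single (Fin.last n) (1 : ℚ)) =
      linearProd (.Iio (Fin.last n)) 1 * F := by
    rw [hF, ← Finset.Iic_top, Fin.top_eq_last, ← Finset.Iio_insert,
      Finset.prod_insert Finset.notMem_Iio_self, mul_left_comm, linearProd_mul_prod_geomSeries,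
      mul_one]
  have hvector : (1 - C 𝐞(Pi.single 0 (-1)) * X) *
      (linearProd (.Ioi 0) (-1) * vectorSeries (n + 1)) = F := by
    rw [← mul_assoc, ← linearProd_insert Finset.notMem_Ioi_self, Finset.Ioi_insert,
      ← bot_eq_zero (α := Fin (n + 1)), Finset.Ici_bot, vectorSeries_eq_prod, mul_left_comm,
      linearProd_mul_prod_geomSeries, mul_one]
  rw [hlast, hvector, shiftSeries_linearProd_Iio ha map_swapHom_prod_geomSeries]

end JacobiTrudi

section Alternants

variable {n : ℕ} {A : Type*} [CommRing A]

theorem symSeries_insert_zero_vectorWeights (n : ℕ) :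
    symSeries (insert 0 (vectorWeights n)) = geomSeries 𝐞(0) * vectorSeries n := by
  have h : (0 : Fin n → ℚ) ∉ vectorWeights n := by
    simp [vectorWeights]
  rw [symSeries, Finset.prod_insert h, vectorSeries, symSeries]

theorem map_symSeries_insert_zero_vectorWeights (σ : Equiv.Perm (Fin n)) (ε : Fin n → Bool) :
    PowerSeries.map (expMap (wHom σ ε)) (symSeries (insert 0 (vectorWeights n))) =
      symSeries (insert 0 (vectorWeights n)) := by
  rw [symSeries_insert_zero_vectorWeights, map_mul, map_geomSeries, expMap_exp, map_zero,
    map_vectorSeries]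

theorem shiftSeries_vectorSeries (a : (Fin n → ℚ) → A) (v : Fin n → ℚ) :
    shiftSeries (vectorSeries n) a v =
      (1 - X) * shiftSeries (symSeries (insert 0 (vectorWeights n))) a v := by
  have h : vectorSeries n = (1 - C 𝐞(0) * X) * symSeries (insert 0 (vectorWeights n)) := by
    rw [symSeries_insert_zero_vectorWeights, ← mul_assoc, one_sub_mul_geomSeries, one_mul]
  rw [h, shiftSeries_one_sub_mul, add_zero, sub_mul, one_mul]

theorem map_negHom_linearProd {i : Fin n} {S : Finset (Fin n)} (hi : i ∉ S) (c : ℚ) :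
    PowerSeries.map (expMap (negHom i)) (linearProd S c) = linearProd S c := by
  refine map_linearProd fun k hk => ?_
  simp [wHom_single, ne_of_mem_of_not_mem hk hi]

theorem swapNegHom_apply_of_ne {i j k : Fin n} (hi : k ≠ i) (hj : k ≠ j) (v : Fin n → ℚ) :
    swapNegHom i j v k = v k := by
  rw [wHom_apply, Equiv.swap_inv, Equiv.swap_apply_of_ne_of_ne hi hj]
  simp [hi, hj]

theorem map_swapNegHom_linearProd {i j : Fin n} {S : Finset (Fin n)} (hi : i ∉ S) (hj : j ∉ S)
    (c : ℚ) : PowerSeries.map (expMap (swapNegHom i j)) (linearProd S c) = linearProd S c := by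
  refine map_linearProd fun k hk => ?_
  have hki := ne_of_mem_of_not_mem hk hi
  have hkj := ne_of_mem_of_not_mem hk hj
  rw [wHom_single, Equiv.swap_apply_of_ne_of_ne hki hkj]
  simp [hki, hkj]

variable [IsAddTorsionFree A]

theorem shiftSeries_geomSeries_last_staircase_one {a : (Fin (n + 1) → ℚ) → A}
    (ha : ∀ i j, i ≠ j → ∀ v, a (swapHom i j v) = -a v)
    (hneg : ∀ v, a (negHom 0 v) = -a v) :
    shiftSeries (geomSeries 𝐞(Pi.single (Fin.last n) 1)) a (staircase (n + 1) 1) =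
      shiftSeries (vectorSeries (n + 1)) a (staircase (n + 1) 1) := by
  have hinv : PowerSeries.map (expMap (negHom 0))
      (linearProd (.Ioi 0) (-1) * vectorSeries (n + 1)) =
        linearProd (.Ioi 0) (-1) * vectorSeries (n + 1) := by
    rw [map_mul, map_negHom_linearProd Finset.notMem_Ioi_self, map_vectorSeries]
  have hfixed : negHom 0 (staircase (n + 1) 1 + Pi.single 0 (-1)) =
      staircase (n + 1) 1 + Pi.single 0 (-1) := by
    ext i
    obtain rfl | hi := eq_or_ne i 0
    · simp [wHom_apply, staircase]
    · simp [wHom_apply, hi]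
  rw [shiftSeries_geomSeries_last ha, shiftSeries_one_sub_mul_of_fixed hneg hinv hfixed,
    shiftSeries_linearProd_Ioi ha fun i j => map_vectorSeries _ _]

theorem shiftSeries_geomSeries_last_staircase_half {a : (Fin (n + 1) → ℚ) → A}
    (ha : ∀ i j, i ≠ j → ∀ v, a (swapHom i j v) = -a v)
    (hneg : ∀ v, a (negHom 0 v) = -a v) :
    shiftSeries (geomSeries 𝐞(Pi.single (Fin.last n) 1)) a (staircase (n + 1) (1 / 2)) =
      (1 - X ^ 2) * shiftSeries (symSeries (insert 0 (vectorWeights (n + 1)))) a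
        (staircase (n + 1) (1 / 2)) := by
  have hinv : PowerSeries.map (expMap (negHom 0))
      (linearProd (.Ioi 0) (-1) * vectorSeries (n + 1)) =
        linearProd (.Ioi 0) (-1) * vectorSeries (n + 1) := by
    rw [map_mul, map_negHom_linearProd Finset.notMem_Ioi_self, map_vectorSeries]
  have hreflect : staircase (n + 1) (1 / 2) + Pi.single 0 (-1) =
      negHom 0 (staircase (n + 1) (1 / 2)) := by
    ext i
    obtain rfl | hi := eq_or_ne i 0
    · norm_num [wHom_apply, staircase]
    · simp [wHom_apply, hi]
  rw [shiftSeries_geomSeries_last ha, shiftSeries_one_sub_mul, hreflect,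
    shiftSeries_reflection hneg hinv,
    shiftSeries_linearProd_Ioi ha fun i j => map_vectorSeries _ _, shiftSeries_vectorSeries]
  ring

theorem shiftSeries_geomSeries_last_staircase_zero {a : (Fin (n + 2) → ℚ) → A}
    (ha : ∀ i j, i ≠ j → ∀ v, a (swapHom i j v) = -a v)
    (hneg : ∀ v, a (swapNegHom 0 1 v) = -a v) :
    shiftSeries (geomSeries 𝐞(Pi.single (Fin.last (n + 1)) 1)) a (staircase (n + 2) 0) =
      (1 - X ^ 2) * shiftSeries (vectorSeries (n + 2)) a (staircase (n + 2) 0) := by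
  set ρ := staircase (n + 2) 0
  have hinv : PowerSeries.map (expMap (swapNegHom 0 1))
      (linearProd (.Ioi 1) (-1) * vectorSeries (n + 2)) =
        linearProd (.Ioi 1) (-1) * vectorSeries (n + 2) := by
    rw [map_mul, map_swapNegHom_linearProd (by simp) Finset.notMem_Ioi_self, map_vectorSeries]
  have hfixed : swapNegHom 0 1 (ρ + Pi.single 0 (-1)) = ρ + Pi.single 0 (-1) := by
    ext k
    obtain rfl | h0 := eq_or_ne k 0
    · simp [wHom_apply, ρ, staircase]
    obtain rfl | h1 := eq_or_ne k 1
    · simp [wHom_apply, ρ, staircase]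
    · exact swapNegHom_apply_of_ne h0 h1 _
  have hreflect : ρ + Pi.single 0 (-1) + Pi.single 1 (-1) = swapNegHom 0 1 ρ := by
    ext k
    obtain rfl | h0 := eq_or_ne k 0
    · simp [wHom_apply, ρ, staircase]
    obtain rfl | h1 := eq_or_ne k 1
    · simp [wHom_apply, ρ, staircase]
    · simp [swapNegHom_apply_of_ne h0 h1, h0, h1]
  have hIoi : Finset.Ioi (0 : Fin (n + 2)) = insert 1 (.Ioi 1) := by
    ext k
    rw [Finset.Ioi_insert, Finset.mem_Ioi, Finset.mem_Ici, Fin.lt_def, Fin.le_def,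
      Fin.val_zero, Fin.val_one, Nat.succ_le_iff]
  have hdrop (k : Fin (n + 2)) :=
    shiftSeries_linearProd_Ioi ha (fun i j => map_vectorSeries _ _) 0 k
  rw [shiftSeries_geomSeries_last ha, shiftSeries_one_sub_mul, hdrop, hIoi,
    linearProd_insert Finset.notMem_Ioi_self, mul_assoc, shiftSeries_one_sub_mul,
    shiftSeries_eq_zero hneg hinv hfixed, hreflect, shiftSeries_reflection hneg hinv, hdrop]
  ring

end Alternants

section GaussianBinomial

variable {R : Type*}

/-- The Gaussian binomial coefficient `[n + k choose k]` in base `q`. -/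
def gaussBinom [CommSemiring R] (q : R) : ℕ → ℕ → R
  | 0, _ => 1
  | _ + 1, 0 => 1
  | n + 1, k + 1 => gaussBinom q (n + 1) k + q ^ (k + 1) * gaussBinom q n (k + 1)

theorem gaussBinom_zero [CommSemiring R] (q : R) (n : ℕ) : gaussBinom q n 0 = 1 := by
  cases n <;> rw [gaussBinom]

variable [CommRing R]

theorem coeff_two_mul_of_one_sub_mul_eq_one {c : R} {S : R⟦X⟧} (hS : (1 - C c * X ^ 2) * S = 1)
    (k : ℕ) : coeff (2 * k) S = c ^ k := by
  have hcoeff (l : ℕ) := congrArg (coeff l) hS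
  simp only [sub_mul, one_mul, mul_assoc, map_sub, coeff_C_mul, coeff_X_pow_mul',
    coeff_one] at hcoeff
  induction k with
  | zero => simpa using hcoeff 0
  | succ k ih =>
    have h := hcoeff (2 * (k + 1))
    rwa [if_pos (by lia), show 2 * (k + 1) - 2 = 2 * k by lia, if_neg (by lia), ih,
      sub_eq_zero, ← pow_succ'] at h

theorem coeff_two_mul_eq_gaussBinom (q c : R) {S : ℕ → R⟦X⟧}
    (hzero : ∀ k, coeff (2 * k) (S 0) = c ^ k)
    (hsucc : ∀ n, (1 - C c * X ^ 2) * S (n + 1) = rescale q (S n)) (n k : ℕ) :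
    coeff (2 * k) (S n) = c ^ k * gaussBinom (q ^ 2) n k := by
  induction n generalizing k with
  | zero => rw [hzero, gaussBinom, mul_one]
  | succ n ihn =>
    have hcoeff (l : ℕ) := congrArg (coeff l) (hsucc n)
    simp only [sub_mul, one_mul, mul_assoc, map_sub, coeff_C_mul, coeff_X_pow_mul',
      coeff_rescale] at hcoeff
    induction k with
    | zero => simpa [ihn 0, gaussBinom_zero] using hcoeff 0
    | succ k ihk =>
      have h := hcoeff (2 * (k + 1))
      rw [if_pos (by lia), show 2 * (k + 1) - 2 = 2 * k by lia, ihk, ihn, sub_eq_iff_eq_add] at h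
      rw [h, gaussBinom]
      ring

end GaussianBinomial

section ClosedForms

variable {n : ℕ}

instance {R : Type*} [Semiring R] [IsAddTorsionFree R] : IsAddTorsionFree R⟦X⟧ :=
  inferInstanceAs (IsAddTorsionFree ((Unit →₀ ℕ) → R))

theorem altKostant_swapHom (ω : ℤ → ℤ) (R : Finset (Fin n → ℚ)) (r : ℚ) (i j : Fin n) (hij : i ≠ j)
    (v : Fin n → ℚ) : altKostant ω R r (swapHom i j v) = -altKostant ω R r v :=
  weylSum_swapHom ω _ hij v

theorem altKostant_negHom (R : Finset (Fin n → ℚ)) (r : ℚ) (i : Fin n) (v : Fin n → ℚ) :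
    altKostant id R r (negHom i v) = -altKostant id R r v :=
  weylSum_negHom _ i v

/-- The generating series of the symmetric powers of the vector representation of type `B_n`,
with every irreducible constituent of highest weight `λ` replaced by `K_{λ,0}`. -/
def symKostantB (n : ℕ) : ℤ⟦X⟧⟦X⟧ :=
  charKostant id (rootsB n) (1 / 2) (symSeries (insert 0 (vectorWeights n)))

/-- The analogue of `symKostantB` for type `C_n`. -/
def symKostantC (n : ℕ) : ℤ⟦X⟧⟦X⟧ :=
  charKostant id (rootsC n) 1 (vectorSeries n)

/-- The analogue of `symKostantB` for type `D_n`. -/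
def symKostantD (n : ℕ) : ℤ⟦X⟧⟦X⟧ :=
  charKostant evenIndicator (rootsD n) 0 (vectorSeries n)

theorem charKostant_rootsB_geomSeries (n : ℕ) :
    charKostant id (rootsB (n + 1)) (1 / 2) (geomSeries 𝐞(Pi.single (Fin.last n) 1)) =
      rescale X (symKostantB n) := by
  rw [rootsB_succ, charKostant_liftRoots id _ map_symSeries_insert_zero_vectorWeights
    (by norm_num) (by positivity), symKostantB]

theorem charKostant_rootsC_geomSeries (n : ℕ) :
    charKostant id (rootsC (n + 1)) 1 (geomSeries 𝐞(Pi.single (Fin.last n) 1)) =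
      symKostantC (n + 1) :=
  shiftSeries_geomSeries_last_staircase_one (altKostant_swapHom _ _ _) (altKostant_negHom _ _ _)

theorem charKostant_rootsD_geomSeries (n : ℕ) :
    charKostant evenIndicator (rootsD (n + 2)) 0 (geomSeries 𝐞(Pi.single (Fin.last (n + 1)) 1)) =
      rescale X (symKostantD (n + 1)) := by
  rw [rootsD_succ, charKostant_liftRoots evenIndicator _ map_vectorSeries le_rfl (by positivity),
    symKostantD, vectorSeries]

theorem symKostantB_succ (n : ℕ) :
    (1 - C 1 * X ^ 2) * symKostantB (n + 1) = rescale X (symKostantB n) := by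
  rw [map_one, one_mul, ← charKostant_rootsB_geomSeries]
  exact (shiftSeries_geomSeries_last_staircase_half (altKostant_swapHom _ _ _)
    (altKostant_negHom _ _ _)).symm

theorem symKostantC_succ (n : ℕ) :
    (1 - C X * X ^ 2) * symKostantC (n + 1) = rescale X (symKostantC n) := by
  rw [← charKostant_rootsC_geomSeries, rootsC_succ,
    charKostant_insert_liftRoots id _ map_vectorSeries zero_le_one (by positivity), symKostantC,
    vectorSeries]

theorem symKostantD_succ (n : ℕ) :
    (1 - C 1 * X ^ 2) * symKostantD (n + 2) = rescale X (symKostantD (n + 1)) := by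
  rw [map_one, one_mul, ← charKostant_rootsD_geomSeries]
  exact (shiftSeries_geomSeries_last_staircase_zero (altKostant_swapHom _ _ _)
    fun v => weylSum_swapNegHom _ _ (by simp) v).symm

theorem altKostant_empty_rank_zero (r : ℚ) (v : Fin 0 → ℚ) : altKostant id ∅ r v = 1 := by
  have hzero (w : Fin 0 → ℚ) : w = 0 := Subsingleton.elim w 0
  rw [altKostant, weylSum_apply]
  simp [kostantQ_empty, signProd, hzero (_ - _)]

theorem coeff_symKostantB_zero (l : ℕ) : coeff l (symKostantB 0) = 1 := by
  have hroots : rootsB 0 = ∅ := by simp [rootsB, rootsD]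
  have hseries : symSeries (insert 0 (vectorWeights 0)) = geomSeries 𝐞(0) := by
    simp [symSeries, vectorWeights]
  rw [symKostantB, hroots, hseries, charKostant, shiftSeries_geomSeries_exp,
    altKostant_empty_rank_zero]

theorem symKostantC_zero : symKostantC 0 = 1 := by
  have hroots : rootsC 0 = ∅ := by simp [rootsC, rootsD]
  have hseries : vectorSeries 0 = 1 := by simp [vectorSeries, symSeries, vectorWeights]
  rw [symKostantC, hroots, hseries, charKostant, shiftSeries_one, altKostant_empty_rank_zero,
    map_one]

theorem altKostant_empty_rank_one (r : ℚ) (v : Fin 1 → ℚ) :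
    altKostant evenIndicator ∅ r v = if v = staircase 1 r then 1 else 0 := by
  have hid : wHom 1 (uniqueElim false) v = v := by
    ext i
    simp [wHom_apply, Fin.fin_one_eq_zero i]
  rw [altKostant, weylSum_apply, Fintype.sum_unique,
    ← Equiv.sum_comp (Equiv.funUnique (Fin 1) Bool).symm]
  simp [signProd, evenIndicator, kostantQ_empty, sub_eq_zero, hid]

theorem coeff_two_mul_symKostantD_one (k : ℕ) : coeff (2 * k) (symKostantD 1) = 1 := by
  have hroots : rootsD 1 = ∅ := by simp [rootsD]
  have hweight (i j : ℕ) :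
      i • (Pi.single 0 1 : Fin 1 → ℚ) + j • Pi.single 0 (-1) = 0 ↔ i = j := by
    simp [funext_iff, ← sub_eq_add_neg, sub_eq_zero]
  rw [symKostantD, charKostant, coeff_shiftSeries, vectorSeries_eq_prod, Fintype.prod_unique,
    Fintype.prod_unique, coeff_mul, map_sum, LinearMap.sum_apply, Finset.sum_apply]
  simp only [coeff_geomSeries, AddMonoidAlgebra.single_pow, one_pow,
    AddMonoidAlgebra.single_mul_single, mul_one, shiftAct_exp, hroots, altKostant_empty_rank_one,
    add_eq_left, hweight, Fin.default_eq_zero]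
  rw [Finset.sum_eq_single (k, k)]
  · exact if_pos rfl
  · rintro ⟨i, j⟩ hij hne
    rw [Finset.HasAntidiagonal.mem_antidiagonal] at hij
    exact if_neg fun h => hne (by ext <;> lia)
  · exact fun h => (h (by simp [two_mul])).elim

theorem KB_row_even (n k : ℕ) :
    KB (n + 1) ((2 * k) • Pi.single (Fin.last n) 1) 0 = X ^ (2 * k) * gaussBinom (X ^ 2) n k := by
  rw [KB_zero, ← rowKostant, ← coeff_charKostant_geomSeries_last, charKostant_rootsB_geomSeries,
    coeff_rescale, coeff_two_mul_eq_gaussBinom X 1 (by simp [coeff_symKostantB_zero])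
      symKostantB_succ, one_pow, one_mul]

theorem KC_row_even (n k : ℕ) :
    KC (n + 1) ((2 * k) • Pi.single (Fin.last n) 1) 0 = X ^ k * gaussBinom (X ^ 2) n k := by
  have hone : (1 - C X * X ^ 2) * symKostantC 1 = 1 := by
    rw [symKostantC_succ, symKostantC_zero, map_one]
  rw [KC_zero, ← rowKostant, ← coeff_charKostant_geomSeries_last, charKostant_rootsC_geomSeries]
  exact coeff_two_mul_eq_gaussBinom (S := fun n => symKostantC (n + 1)) X X
    (coeff_two_mul_of_one_sub_mul_eq_one hone) (fun n => symKostantC_succ (n + 1)) n k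

theorem KD_row_even (n k : ℕ) :
    KD (n + 2) ((2 * k) • Pi.single (Fin.last (n + 1)) 1) 0 =
      X ^ (2 * k) * gaussBinom (X ^ 2) n k := by
  have hcoeff := coeff_two_mul_eq_gaussBinom (S := fun n => symKostantD (n + 1)) X 1
    (by simp [coeff_two_mul_symKostantD_one]) symKostantD_succ n k
  rw [KD_zero, ← rowKostant, ← coeff_charKostant_geomSeries_last, charKostant_rootsD_geomSeries,
    coeff_rescale, hcoeff, one_pow, one_mul]

end ClosedForms

end RowKostkaFoulkes

/-- For even `l`:
`K^{B_n}_{(l),0} = q^{l/2} K^{C_n}_{(l),0}` for `n ≥ 1`, and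
`K^{D_n}_{(l),0} = K^{B_{n-1}}_{(l),0} = q^{l/2} K^{C_{n-1}}_{(l),0}` for `n ≥ 2`. -/
theorem K_row_even (l : ℕ) (hl : Even l) :
    (∀ n : ℕ, 1 ≤ n →
      KB n (fun i => if (i : ℕ) = n - 1 then (l : ℚ) else 0) 0 =
        (PowerSeries.X : PowerSeries ℤ) ^ (l / 2) *
          KC n (fun i => if (i : ℕ) = n - 1 then (l : ℚ) else 0) 0) ∧
    (∀ n : ℕ, 2 ≤ n →
      KD n (fun i => if (i : ℕ) = n - 1 then (l : ℚ) else 0) 0 =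
        KB (n - 1) (fun i => if (i : ℕ) = n - 2 then (l : ℚ) else 0) 0 ∧
      KD n (fun i => if (i : ℕ) = n - 1 then (l : ℚ) else 0) 0 =
        (PowerSeries.X : PowerSeries ℤ) ^ (l / 2) *
          KC (n - 1) (fun i => if (i : ℕ) = n - 2 then (l : ℚ) else 0) 0) := by
  obtain ⟨k, rfl⟩ := hl.two_dvd
  rw [Nat.mul_div_cancel_left k two_pos]
  have hBC (n : ℕ) : KB (n + 1) ((2 * k) • Pi.single (Fin.last n) 1) 0 =
      PowerSeries.X ^ k * KC (n + 1) ((2 * k) • Pi.single (Fin.last n) 1) 0 := by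
    rw [KB_row_even, KC_row_even, ← mul_assoc, ← pow_add, two_mul]
  refine ⟨fun n hn => ?_, fun n hn => ?_⟩
  · obtain ⟨n, rfl⟩ := Nat.exists_eq_add_of_le' hn
    simp only [Nat.add_sub_cancel, ite_eq_single_last, hBC]
  · obtain ⟨n, rfl⟩ := Nat.exists_eq_add_of_le' hn
    rw [show n + 2 - 1 = n + 1 from rfl, Nat.add_sub_cancel, ite_eq_single_last,
      ite_eq_single_last, ← hBC, KD_row_even, KB_row_even]
    exact ⟨rfl, rfl⟩
end

section
/- Let λ = (λ_2, λ_1) ∈ ℤ² with λ_2 ≥ λ_1 ≥ 0. Then the Kostka–Foulkes polynomial of type C_2 with second weight zero satisfies: (a) if λ_2 and λ_1 are both even, K^{C_2}_{λ,0}(q) = q^{(λ_2+λ_1)/2} · ( (q^{λ_1+2} − 1)/(q² − 1) + q² · ((q^{λ_1+1} − 1)/(q − 1)) · ((q^{λ_2−λ_1} − 1)/(q² − 1)) ); (b) if λ_2 and λ_1 are both odd, K^{C_2}_{λ,0}(q) = q^{(λ_2+λ_1)/2 + 1} · ( (q^{λ_1+1} − 1)/(q² − 1) + q · ((q^{λ_1+1}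 − 1)/(q − 1)) · ((q^{λ_2−λ_1} − 1)/(q² − 1)) ); (c) if λ_2 and λ_1 have different parities, K^{C_2}_{λ,0}(q) = 0. (In cases (a) and (b) every displayed quotient is a polynomial: (q^{2a} − 1)/(q² − 1) = 1 + q² + … + q^{2a−2} and (q^{a} − 1)/(q − 1) = 1 + q + … + q^{a−1}.) -/
open scoped BigOperators

/-!
Write `λ = (b + 2d, b)` and `s = b + d`. For weight reasons, only the identity, the sign change of
`e_1` and the transposition contribute to the alternating sum.

A decomposition of a given weight into `k` positive roots of type `C_2` is determined by the
multiplicity of `2e_2`, which ranges over an interval. For `k = s + j`, the intervals of the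
identity and of the sign change have the same lower end, and the difference of their lengths counts
the `m ≥ 0` with `2d - j ≤ 2m ≤ 2d - j + b`. The `m < d` account for the coefficient of `q^j` in
`q^2 (1 + q + ⋯ + q^b) (1 + q^2 + ⋯ + q^(2d-2))`. The `m ≥ d` outnumber the decompositions coming
from the transposition by one if `j ≤ b` and `j ≡ b` modulo `2`, and are equally many otherwise.
-/

section KostantPartition

open PowerSeries

variable {n : ℕ} {R : Finset (Fin n → ℚ)}

lemma coeff_kostantQ_of_equiv {ι : Type*} [Fintype ι] (e : ι ≃ {α // α ∈ R}) (β : Fin n → ℚ)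
    (k : ℕ) :
    coeff k (kostantQ R β) =
      Nat.card {m : ι → ℕ // ∑ i, m i = k ∧ ∑ i, (m i : ℚ) • (e i : Fin n → ℚ) = β} := by
  rw [kostantQ, coeff_mk]
  refine congrArg _ (Nat.card_congr
    ((e.symm.arrowCongr (Equiv.refl ℕ)).subtypeEquiv fun m => ?_))
  rw [← e.sum_comp, ← e.sum_comp]
  simp

lemma kostantQ_eq_zero_of_notMem_closure {β : Fin n → ℚ}
    (hβ : β ∉ AddSubmonoid.closure (R : Set (Fin n → ℚ))) : kostantQ R β = 0 := by
  ext k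
  have : IsEmpty {m : {α // α ∈ R} → ℕ //
      ∑ α, m α = k ∧ ∑ α, (m α : ℚ) • (α : Fin n → ℚ) = β} := by
    refine ⟨fun ⟨m, _, hm⟩ => hβ (hm ▸ sum_mem fun α _ => ?_)⟩
    rw [Nat.cast_smul_eq_nsmul]
    exact nsmul_mem (AddSubmonoid.subset_closure α.2) _
  rw [kostantQ, coeff_mk, Nat.card_of_isEmpty, Nat.cast_zero, map_zero]

end KostantPartition

section PartitionFunctionC2

open PowerSeries

/-- The positive roots `e_2 - e_1`, `e_2 + e_1`, `2e_1`, `2e_2` of type `C_2`, in this order; the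
first entry of each vector is its `e_1`-coordinate. -/
def posRootC2 : Fin 4 → Fin 2 → ℚ := ![![-1, 1], ![1, 1], ![2, 0], ![0, 2]]

lemma posRootC2_injective : Function.Injective posRootC2 := by
  decide +kernel

lemma mem_rootsC_two_iff (α : Fin 2 → ℚ) : α ∈ rootsC 2 ↔ α ∈ Set.range posRootC2 := by
  have h : rootsC 2 = Finset.univ.image posRootC2 := by decide +kernel
  simp [h]

/-- The partition function of type `C_2` at the weight with `e_1`-coordinate `x` and
`e_2`-coordinate `y`. -/
noncomputable def kostantC2 (x y : ℤ) : PowerSeries ℤ := kostantQ (rootsC 2) ![(x : ℚ), (y : ℚ)]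

/-- The decompositions of the weight with `e_1`-coordinate `x` and `e_2`-coordinate `y` into `k`
positive roots of type `C_2`, encoded by the multiplicities of the roots in the order of
`posRootC2`. -/
abbrev PartitionC2 (x y : ℤ) (k : ℕ) : Type :=
  {m : Fin 4 → ℕ // m 0 + m 1 + m 2 + m 3 = k ∧
    -(m 0 : ℤ) + m 1 + 2 * m 2 = x ∧ (m 0 : ℤ) + m 1 + 2 * m 3 = y}

lemma coeff_kostantC2_eq_card (x y : ℤ) (k : ℕ) :
    coeff k (kostantC2 x y) = Nat.card (PartitionC2 x y k) := by
  obtain ⟨e, he⟩ : ∃ e : Fin 4 ≃ {α // α ∈ rootsC 2}, ∀ i, (e i : Fin 2 → ℚ) = posRootC2 i :=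
    ⟨(Equiv.ofInjective _ posRootC2_injective).trans
      (Equiv.subtypeEquivRight fun α => (mem_rootsC_two_iff α).symm), fun _ => rfl⟩
  rw [kostantC2, coeff_kostantQ_of_equiv e]
  refine congrArg _ (Nat.card_congr (Equiv.subtypeEquivRight fun m => ?_))
  rw [Fin.sum_univ_four, Fin.sum_univ_four, funext_iff, Fin.forall_fin_two,
    ← @Int.cast_inj ℚ, ← @Int.cast_inj ℚ]
  simp [he, posRootC2, mul_comm]

/-- Once the number `k` of roots and the multiplicity `t` of `2e_2` are fixed, the weight determines
the other multiplicities. -/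
def PartitionC2.equivIcc {x y s : ℤ} {k : ℕ} (hs : x + y = 2 * s) (hk : s ≤ k) :
    PartitionC2 x y k ≃ Finset.Icc (max 0 (y - k)) ((y + s - k) / 2) where
  toFun m := ⟨m.1 3, by have := m.2; rw [Finset.mem_Icc]; omega⟩
  invFun t := ⟨![(k - s).toNat, (y + s - k - 2 * t).toNat, (t - (y - k)).toNat, (t : ℤ).toNat], by
    have := Finset.mem_Icc.1 t.2
    simp only [Matrix.cons_val, Int.ofNat_toNat]
    omega⟩
  left_inv m := by
    have := m.2
    ext i
    fin_cases i <;>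
      simp only [Int.toNat_natCast, Fin.zero_eta, Fin.mk_one, Fin.reduceFinMk, Matrix.cons_val] <;>
      omega
  right_inv t := by
    have := Finset.mem_Icc.1 t.2
    ext
    simp only [Matrix.cons_val, Int.ofNat_toNat, sup_eq_left]
    omega

lemma coeff_kostantC2_of_le {x y s : ℤ} {k : ℕ} (hs : x + y = 2 * s) (hk : s ≤ k) :
    coeff k (kostantC2 x y) = (Finset.Icc (max 0 (y - k)) ((y + s - k) / 2)).card := by
  rw [coeff_kostantC2_eq_card, Nat.card_congr (PartitionC2.equivIcc hs hk),
    Nat.card_eq_fintype_card, Fintype.card_coe]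

lemma coeff_kostantC2_eq_zero_of_lt {x y : ℤ} {k : ℕ} (hk : 2 * k < max (x + y) (y - x)) :
    coeff k (kostantC2 x y) = 0 := by
  have : IsEmpty (PartitionC2 x y k) := ⟨fun ⟨m, _⟩ => by omega⟩
  rw [coeff_kostantC2_eq_card, Nat.card_of_isEmpty, Nat.cast_zero]

lemma nonneg_and_add_eq_two_mul_of_mem_closure_rootsC_two {β : Fin 2 → ℚ}
    (hβ : β ∈ AddSubmonoid.closure (rootsC 2 : Set (Fin 2 → ℚ))) :
    0 ≤ β 1 ∧ ∃ s : ℕ, β 0 + β 1 = 2 * s := by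
  induction hβ using AddSubmonoid.closure_induction with
  | mem α hα =>
    obtain ⟨i, rfl⟩ := (mem_rootsC_two_iff α).1 hα
    fin_cases i
    · exact ⟨by simp [posRootC2], 0, by simp [posRootC2]⟩
    · exact ⟨by simp [posRootC2], 1, by norm_num [posRootC2]⟩
    · exact ⟨by simp [posRootC2], 1, by simp [posRootC2]⟩
    · exact ⟨by simp [posRootC2], 1, by simp [posRootC2]⟩
  | zero => exact ⟨le_rfl, 0, by simp⟩
  | add β γ _ _ hβ hγ =>
    obtain ⟨hβ₁, s, hs⟩ := hβ
    obtain ⟨hγ₁, t, ht⟩ := hγ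
    refine ⟨add_nonneg hβ₁ hγ₁, s + t, ?_⟩
    push_cast [Pi.add_apply]
    linarith

lemma kostantC2_eq_zero_of_neg {x y : ℤ} (h : y < 0 ∨ x + y < 0) : kostantC2 x y = 0 := by
  refine kostantQ_eq_zero_of_notMem_closure fun hβ => ?_
  obtain ⟨hy, s, hs⟩ := nonneg_and_add_eq_two_mul_of_mem_closure_rootsC_two hβ
  simp only [Matrix.cons_val_zero, Matrix.cons_val_one] at hy hs
  norm_cast at hy hs
  omega

lemma kostantC2_eq_zero_of_odd {x y : ℤ} (h : Odd (x + y)) : kostantC2 x y = 0 := by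
  refine kostantQ_eq_zero_of_notMem_closure fun hβ => Int.not_even_iff_odd.2 h ?_
  obtain ⟨-, s, hs⟩ := nonneg_and_add_eq_two_mul_of_mem_closure_rootsC_two hβ
  simp only [Matrix.cons_val_zero, Matrix.cons_val_one] at hs
  exact even_iff_two_dvd.2 ⟨s, by exact_mod_cast hs⟩

end PartitionFunctionC2

section WeylGroupC2

lemma sum_signedPerm_fin_two {M : Type*} [AddCommMonoid M]
    (f : Equiv.Perm (Fin 2) → (Fin 2 → Bool) → M) :
    ∑ σ, ∑ ε, f σ ε =
      f 1 ![false, false] + f 1 ![true, false] + f 1 ![false, true] + f 1 ![true, true] +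
      (f (Equiv.swap 0 1) ![false, false] + f (Equiv.swap 0 1) ![true, false] +
        f (Equiv.swap 0 1) ![false, true] + f (Equiv.swap 0 1) ![true, true]) := by
  have sum_sign (g : (Fin 2 → Bool) → M) :
      ∑ ε, g ε = g ![false, false] + g ![true, false] + g ![false, true] + g ![true, true] := by
    rw [← (finTwoArrowEquiv Bool).symm.sum_comp, Fintype.sum_prod_type]
    simp only [Fintype.sum_bool, finTwoArrowEquiv_symm_apply]
    abel
  have univ_perm : (Finset.univ : Finset (Equiv.Perm (Fin 2))) = {1, Equiv.swap 0 1} := by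
    decide
  rw [univ_perm, Finset.sum_pair (by decide), sum_sign, sum_sign]

lemma wAct_add_rhoC_two_sub (σ : Equiv.Perm (Fin 2)) (ε : Fin 2 → Bool) (x y u v : ℚ) :
    wAct σ ε (![x, y] + rhoC 2) - (![u, v] + rhoC 2) =
      ![(if ε 0 then -1 else 1) * ![x + 1, y + 2] (σ⁻¹ 0) - 1 - u,
        (if ε 1 then -1 else 1) * ![x + 1, y + 2] (σ⁻¹ 1) - 2 - v] := by
  have add_rhoC (z w : ℚ) : ![z, w] + rhoC 2 = ![z + 1, w + 2] := by
    ext i; fin_cases i <;> norm_num [rhoC]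
  rw [add_rhoC, add_rhoC]
  ext i
  fin_cases i <;>
    simp only [Fin.zero_eta, Fin.mk_one, Pi.sub_apply, wAct, Matrix.cons_val] <;>
    ring

lemma KC_two_eq (x y u v : ℤ) :
    KC 2 ![(x : ℚ), (y : ℚ)] ![(u : ℚ), (v : ℚ)] =
      kostantC2 (x - u) (y - v) - kostantC2 (-x - 2 - u) (y - v) -
        kostantC2 (x - u) (-y - 4 - v) + kostantC2 (-x - 2 - u) (-y - 4 - v) -
      (kostantC2 (y + 1 - u) (x - 1 - v) - kostantC2 (-y - 3 - u) (x - 1 - v) -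
        kostantC2 (y + 1 - u) (-x - 3 - v) + kostantC2 (-y - 3 - u) (-x - 3 - v)) := by
  rw [KC, sum_signedPerm_fin_two]
  simp only [wAct_add_rhoC_two_sub, wDet, Fin.prod_univ_two, kostantC2, Equiv.Perm.sign_one,
    Equiv.Perm.sign_swap zero_ne_one, inv_one, Equiv.Perm.one_apply, Equiv.swap_inv,
    Equiv.swap_apply_left, Equiv.swap_apply_right, Matrix.cons_val, reduceIte, Bool.false_eq_true,
    Units.val_one, Units.val_neg]
  push_cast
  simp only [one_mul, neg_mul, one_smul, neg_smul]
  ring_nf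

lemma KC_two_eq_of_dominant {x y u v : ℤ} (hx : 0 ≤ x) (hxy : x ≤ y) (hu : 0 ≤ u) (hv : 0 ≤ v) :
    KC 2 ![(x : ℚ), (y : ℚ)] ![(u : ℚ), (v : ℚ)] =
      kostantC2 (x - u) (y - v) - kostantC2 (-x - 2 - u) (y - v) -
        kostantC2 (y + 1 - u) (x - 1 - v) := by
  rw [KC_two_eq, kostantC2_eq_zero_of_neg (x := x - u) (y := -y - 4 - v) (by omega),
    kostantC2_eq_zero_of_neg (x := -x - 2 - u) (y := -y - 4 - v) (by omega),
    kostantC2_eq_zero_of_neg (x := -y - 3 - u) (y := x - 1 - v) (by omega),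
    kostantC2_eq_zero_of_neg (x := y + 1 - u) (y := -x - 3 - v) (by omega),
    kostantC2_eq_zero_of_neg (x := -y - 3 - u) (y := -x - 3 - v) (by omega)]
  ring

lemma KC_two_zero_eq {a b : ℕ} (hba : b ≤ a) :
    KC 2 ![(b : ℚ), (a : ℚ)] 0 =
      kostantC2 b a - kostantC2 (-b - 2) a - kostantC2 (a + 1) (b - 1) := by
  have zero_eq : (0 : Fin 2 → ℚ) = ![((0 : ℤ) : ℚ), ((0 : ℤ) : ℚ)] := by
    ext i; fin_cases i <;> simp
  have dominant := KC_two_eq_of_dominant (x := b) (y := a) (by omega) (by omega) le_rfl le_rfl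
  simpa [zero_eq] using dominant

end WeylGroupC2

section GeometricSums

open PowerSeries

variable (R : Type*) [CommSemiring R]

lemma coeff_X_pow_mul_geom_sum_mul_geom_sum (e n c d j : ℕ) :
    coeff j ((X : PowerSeries R) ^ e * (∑ t ∈ Finset.range n, (X : PowerSeries R) ^ t) *
        ∑ u ∈ Finset.range d, (X : PowerSeries R) ^ (c * u)) =
      ((Finset.range d).filter fun u => c * u + e ≤ j ∧ j < c * u + e + n).card := by
  rw [Finset.mul_sum, map_sum]
  simp only [coeff_mul_X_pow', coeff_X_pow_mul', map_sum, coeff_X_pow, Finset.sum_ite_eq,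
    Finset.mem_range, ← ite_and, Finset.sum_boole]
  congr! 3 with u
  omega

lemma coeff_X_pow_mod_mul_geom_sum (c b j : ℕ) :
    coeff j ((X : PowerSeries R) ^ (b % c) *
        ∑ t ∈ Finset.range (b / c + 1), (X : PowerSeries R) ^ (c * t)) =
      if j ≤ b ∧ j ≡ b [MOD c] then 1 else 0 := by
  simp only [Finset.mul_sum, ← pow_add, map_sum, coeff_X_pow]
  have exponent_eq_iff : ∀ t ∈ Finset.range (b / c + 1),
      j = b % c + c * t ↔ t = j / c ∧ j ≤ b ∧ j ≡ b [MOD c] := by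
    intro t ht
    constructor
    · rintro rfl
      have le_b : b % c + c * t ≤ b :=
        calc b % c + c * t ≤ b % c + c * (b / c) := by
              gcongr
              exact Finset.mem_range_succ_iff.1 ht
          _ = b := Nat.mod_add_div b c
      refine ⟨?_, le_b, by simp [Nat.ModEq]⟩
      rcases c.eq_zero_or_pos with rfl | hc
      · simpa using ht
      · rw [Nat.add_mul_div_left _ _ hc, Nat.div_eq_of_lt (Nat.mod_lt b hc), zero_add]
    · rintro ⟨rfl, -, hmod⟩
      rw [← hmod, Nat.mod_add_div]
  rw [Finset.sum_congr rfl fun t ht => if_congr (exponent_eq_iff t ht) rfl rfl]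
  simp only [ite_and, Finset.sum_ite_eq', Finset.mem_range, Nat.lt_succ_iff]
  split_ifs with h₁ h₂ h₃ h₄ <;> simp_all [Nat.div_le_div_right]

end GeometricSums

section Counting

/-- The second interval consists of the `m` in the first one with `2 * m < 2 * d - j`. Of the
remaining `m`, those below `d` correspond to `u = d - 1 - m` and the others to `m - d`. -/
lemma card_Icc_max_sub_card_Icc_max (b d j : ℕ) :
    ((Finset.Icc (max 0 ((d : ℤ) - j)) ((b + 2 * d - j) / 2)).card : ℤ) -
        (Finset.Icc (max 0 ((d : ℤ) - j)) ((2 * d - 1 - j) / 2)).card =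
      ((Finset.range d).filter fun u => 2 * u + 2 ≤ j ∧ j < 2 * u + 2 + (b + 1)).card +
        (Finset.Icc (0 : ℤ) (((b : ℤ) - j) / 2)).card := by
  have filter_eq : ((Finset.range d).filter fun u => 2 * u + 2 ≤ j ∧ j < 2 * u + 2 + (b + 1)) =
      Finset.Ico ((j - b - 1) / 2) (min d (j / 2)) := by
    ext u
    simp only [Finset.mem_filter, Finset.mem_range, Finset.mem_Ico, lt_min_iff]
    omega
  calc ((Finset.Icc (max 0 ((d : ℤ) - j)) ((b + 2 * d - j) / 2)).card : ℤ) -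
        (Finset.Icc (max 0 ((d : ℤ) - j)) ((2 * d - 1 - j) / 2)).card
    _ = ((Finset.Icc (max 0 ((2 * d + 1 - j) / 2 : ℤ)) ((b + 2 * d - j) / 2)).card : ℤ) := by
      simp only [Int.card_Icc]
      omega
    _ = (Finset.Icc (max 0 ((2 * d + 1 - j) / 2 : ℤ))
            (min (d - 1) ((b + 2 * d - j) / 2))).card +
          (Finset.Icc (d : ℤ) ((b + 2 * d - j) / 2)).card := by
      simp only [Int.card_Icc]
      omega
    _ = _ := by
      rw [filter_eq]
      simp only [Int.card_Icc, Nat.card_Ico]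
      omega

lemma card_Icc_zero_half_sub_card_Icc_zero_half (n : ℤ) :
    ((Finset.Icc 0 (n / 2)).card : ℤ) - (Finset.Icc 0 ((n - 1) / 2)).card =
      if 0 ≤ n ∧ Even n then 1 else 0 := by
  simp only [Int.card_Icc, Int.even_iff]
  split_ifs <;> omega

end Counting

section ZeroWeight

open PowerSeries

lemma KC_two_zero_of_odd {a b : ℕ} (hba : b ≤ a) (h : Odd (a + b)) :
    KC 2 ![(b : ℚ), (a : ℚ)] 0 = 0 := by
  rw [KC_two_zero_eq hba, kostantC2_eq_zero_of_odd (by grind), kostantC2_eq_zero_of_odd (by grind),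
    kostantC2_eq_zero_of_odd (by grind), sub_zero, sub_zero]

lemma coeff_KC_two_zero_of_lt {a b k : ℕ} (hba : b ≤ a) (hk : 2 * k < a + b) :
    coeff k (KC 2 ![(b : ℚ), (a : ℚ)] 0) = 0 := by
  rw [KC_two_zero_eq hba, map_sub, map_sub, coeff_kostantC2_eq_zero_of_lt (by omega),
    coeff_kostantC2_eq_zero_of_lt (by omega), coeff_kostantC2_eq_zero_of_lt (by omega), sub_zero,
    sub_zero]

lemma coeff_add_KC_two_zero (b d j : ℕ) :
    coeff (j + (b + d)) (KC 2 ![(b : ℚ), (b + 2 * d : ℕ)] 0) =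
      (if j ≤ b ∧ j ≡ b [MOD 2] then 1 else 0) +
        ((Finset.range d).filter fun u => 2 * u + 2 ≤ j ∧ j < 2 * u + 2 + (b + 1)).card := by
  have coeff_identity : coeff (j + (b + d)) (kostantC2 b (b + 2 * d : ℕ)) =
      (Finset.Icc (max 0 ((d : ℤ) - j)) ((b + 2 * d - j) / 2)).card := by
    rw [coeff_kostantC2_of_le (s := b + d) (by push_cast; ring) (by omega)]
    congr! 3 <;> omega
  have coeff_signChange : coeff (j + (b + d)) (kostantC2 (-b - 2) (b + 2 * d : ℕ)) =
      (Finset.Icc (max 0 ((d : ℤ) - j)) ((2 * d - 1 - j) / 2)).card := by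
    rw [coeff_kostantC2_of_le (s := d - 1) (by push_cast; ring) (by omega)]
    congr! 3 <;> omega
  have coeff_transposition : coeff (j + (b + d)) (kostantC2 ((b + 2 * d : ℕ) + 1) (b - 1)) =
      (Finset.Icc (0 : ℤ) ((b - j - 1) / 2)).card := by
    rw [coeff_kostantC2_of_le (s := b + d) (by push_cast; ring) (by omega), max_eq_left (by omega)]
    congr! 3
    omega
  rw [KC_two_zero_eq (Nat.le_add_right b (2 * d)), map_sub, map_sub, coeff_identity,
    coeff_signChange, coeff_transposition, card_Icc_max_sub_card_Icc_max, add_sub_assoc,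
    card_Icc_zero_half_sub_card_Icc_zero_half, add_comm]
  congr 1
  exact if_congr (by rw [Nat.ModEq, Int.even_iff]; omega) rfl rfl

lemma KC_two_zero_of_even {a b : ℕ} (hba : b ≤ a) (h : Even (a + b)) :
    KC 2 ![(b : ℚ), (a : ℚ)] 0 =
      X ^ ((a + b) / 2) *
        (X ^ (b % 2) * ∑ t ∈ Finset.range (b / 2 + 1), X ^ (2 * t) +
          X ^ 2 * (∑ t ∈ Finset.range (b + 1), X ^ t) *
            ∑ t ∈ Finset.range ((a - b) / 2), X ^ (2 * t)) := by
  obtain ⟨d, rfl⟩ : ∃ d, a = b + 2 * d := ⟨(a - b) / 2, by grind⟩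
  rw [show (b + 2 * d + b) / 2 = b + d by omega, show (b + 2 * d - b) / 2 = d by omega]
  ext k
  rcases lt_or_ge k (b + d) with hk | hk
  · rw [coeff_KC_two_zero_of_lt hba (by omega), coeff_X_pow_mul', if_neg hk.not_ge]
  · obtain ⟨j, rfl⟩ := Nat.exists_eq_add_of_le' hk
    rw [coeff_add_KC_two_zero, coeff_X_pow_mul, map_add, coeff_X_pow_mod_mul_geom_sum,
      coeff_X_pow_mul_geom_sum_mul_geom_sum]

end ZeroWeight

/-- Explicit formula for `K^{C_2}_{λ,0}(q)` where `λ = (a, b)`,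
`a ≥ b ≥ 0` (here the weight is written with `e_1`-coordinate `b` and
`e_2`-coordinate `a`).  Geometric sums realize the polynomial quotients:
`(q^{2s} - 1)/(q² - 1) = ∑_{t<s} q^{2t}` and `(q^s - 1)/(q - 1) = ∑_{t<s} q^t`. -/
theorem KC2_explicit (a b : ℕ) (hba : b ≤ a) :
    (Even a → Even b →
      KC 2 ![(b : ℚ), (a : ℚ)] 0 =
        (PowerSeries.X : PowerSeries ℤ) ^ ((a + b) / 2) *
          ((∑ t ∈ Finset.range (b / 2 + 1), (PowerSeries.X : PowerSeries ℤ) ^ (2 * t)) +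
            (PowerSeries.X : PowerSeries ℤ) ^ 2 *
              (∑ t ∈ Finset.range (b + 1), (PowerSeries.X : PowerSeries ℤ) ^ t) *
              (∑ t ∈ Finset.range ((a - b) / 2), (PowerSeries.X : PowerSeries ℤ) ^ (2 * t)))) ∧
    (Odd a → Odd b →
      KC 2 ![(b : ℚ), (a : ℚ)] 0 =
        (PowerSeries.X : PowerSeries ℤ) ^ ((a + b) / 2 + 1) *
          ((∑ t ∈ Finset.range ((b + 1) / 2), (PowerSeries.X : PowerSeries ℤ) ^ (2 * t)) +
            (PowerSeries.X : PowerSeries ℤ) *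
              (∑ t ∈ Finset.range (b + 1), (PowerSeries.X : PowerSeries ℤ) ^ t) *
              (∑ t ∈ Finset.range ((a - b) / 2), (PowerSeries.X : PowerSeries ℤ) ^ (2 * t)))) ∧
    (¬ a % 2 = b % 2 → KC 2 ![(b : ℚ), (a : ℚ)] 0 = 0) := by
  refine ⟨fun ha hb => ?_, fun ha hb => ?_, fun hab => ?_⟩
  · rw [KC_two_zero_of_even hba (ha.add hb), Nat.even_iff.1 hb, pow_zero, one_mul]
  · have half_succ : (b + 1) / 2 = b / 2 + 1 := by grind
    rw [KC_two_zero_of_even hba (ha.add_odd hb), Nat.odd_iff.1 hb, half_succ]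
    ring
  · exact KC_two_zero_of_odd hba (by grind)
end
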